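/- arXiv:0707.2117 — 3 statements merged into one kernel-verified Lean document; each statement's English description precedes it below -/
import Mathlib

section
/- Let G be a finite simple graph of girth at least g and minimum degree at least 6(d+1), where d ≥ 1 is an integer. Then for every set X of vertices of G with |X| ≤ (1/3)·d^{⌊(g-1)/2⌋}, the open neighborhood ∂X = {y ∉ X : y is adjacent to some x ∈ X} satisfies |∂X| > 2|X|. -/
theorem ge_peel {V : Type*} [DecidableEq V] (G : SimpleGraph V) [DecidableRel G.Adj] (c : ℕ)
    (hc : 1 ≤ c) (S : Finset V) (hS : S.Nonempty)
    (h : 2 * c * S.card ≤ ∑ v ∈ S, (S.filter (G.Adj v)).card) :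
    ∃ T ⊆ S, T.Nonempty ∧ ∀ v ∈ T, c + 1 ≤ (T.filter (G.Adj v)).card := by
  induction S using Finset.strongInduction with
  | H S ih =>
    by_cases hall : ∀ v ∈ S, c + 1 ≤ (S.filter (G.Adj v)).card
    · exact ⟨S, subset_rfl, hS, hall⟩
    push Not at hall
    obtain ⟨v, hv, hlt⟩ := hall
    have hsplit : ∀ u, (S.filter (G.Adj u)).card
        = ((S.erase v).filter (G.Adj u)).card + if G.Adj u v then 1 else 0 := by
      intro u
      conv_lhs => rw [← Finset.insert_erase hv]
      rw [Finset.filter_insert]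
      split_ifs with hu
      · rw [Finset.card_insert_of_notMem (by simp)]
      · rfl
    have h1 : ∑ u ∈ S, (S.filter (G.Adj u)).card
        = (∑ u ∈ S.erase v, ((S.erase v).filter (G.Adj u)).card)
          + 2 * (S.filter (G.Adj v)).card := by
      rw [← Finset.add_sum_erase _ _ hv]
      rw [Finset.sum_congr rfl (fun u _ => hsplit u), Finset.sum_add_distrib]
      have : ∑ u ∈ S.erase v, (if G.Adj u v then 1 else 0) = (S.filter (G.Adj v)).card := by
        rw [hsplit v, Finset.sum_boole]
        simp [G.adj_comm]
      rw [this]; ring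
    have hcard : (S.erase v).card + 1 = S.card := Finset.card_erase_add_one hv
    have hne : (S.erase v).Nonempty := by
      by_contra hemp
      rw [Finset.not_nonempty_iff_eq_empty] at hemp
      have h0 : (S.filter (G.Adj v)).card = 0 := by
        rw [hsplit v, hemp]; simp
      rw [h1, hemp, h0, ← hcard, hemp] at h
      simp at h; omega
    obtain ⟨T, hT, h2⟩ := ih (S.erase v) (Finset.erase_ssubset hv) hne (by
      rw [h1, ← hcard] at h
      nlinarith)
    exact ⟨T, hT.trans (Finset.erase_subset _ _), h2⟩

theorem ge_unique {W : Type*} (H : SimpleGraph W) (g : ℕ)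
    (hg : ∀ (v : W) (w : H.Walk v v), w.IsCycle → g ≤ w.length)
    {u v : W} (p q : H.Walk u v) (hp : p.IsPath) (hq : q.IsPath)
    (hlen : p.length + q.length < g) : p = q := by
  classical
  by_contra hne
  let K : SimpleGraph W := SimpleGraph.fromEdgeSet {e | e ∈ p.edges ∨ e ∈ q.edges}
  have hpK : ∀ e ∈ p.edges, e ∈ K.edgeSet := by
    intro e he
    simp only [K, SimpleGraph.edgeSet_fromEdgeSet]
    exact ⟨Or.inl he, H.not_isDiag_of_mem_edgeSet (p.edges_subset_edgeSet he)⟩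
  have hqK : ∀ e ∈ q.edges, e ∈ K.edgeSet := by
    intro e he
    simp only [K, SimpleGraph.edgeSet_fromEdgeSet]
    exact ⟨Or.inr he, H.not_isDiag_of_mem_edgeSet (q.edges_subset_edgeSet he)⟩
  have hKs : ∀ e ∈ K.edgeSet, e ∈ p.edges ∨ e ∈ q.edges := by
    intro e he
    simp only [K, SimpleGraph.edgeSet_fromEdgeSet] at he
    exact he.1
  have hKH : K ≤ H := by
    rw [← SimpleGraph.edgeSet_subset_edgeSet]
    intro e he
    rcases hKs e he with h | h
    · exact p.edges_subset_edgeSet h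
    · exact q.edges_subset_edgeSet h
  have hnac : ¬ K.IsAcyclic := by
    intro hac
    have := hac.path_unique ⟨p.transfer K hpK, hp.transfer hpK⟩ ⟨q.transfer K hqK, hq.transfer hqK⟩
    have h2 : p.transfer K hpK = q.transfer K hqK := congrArg Subtype.val this
    apply hne
    apply SimpleGraph.Walk.ext_support
    have := congrArg SimpleGraph.Walk.support h2
    simpa using this
  simp only [SimpleGraph.IsAcyclic, not_forall, not_not] at hnac
  obtain ⟨x, c, hc⟩ := hnac
  have h1 := hg x (c.mapLe hKH) (hc.mapLe hKH)
  have h2 : c.edges.length ≤ (p.edges ++ q.edges).length := by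
    apply List.Subperm.length_le
    apply List.subperm_of_subset hc.edges_nodup
    intro e he
    rw [List.mem_append]
    exact hKs e (c.edges_subset_edgeSet he)
  simp at h1 h2
  omega

theorem ge_moore {W : Type*} [Fintype W] [Nonempty W] (H : SimpleGraph W) [DecidableRel H.Adj]
    (g c k : ℕ)
    (hg : ∀ (v : W) (w : H.Walk v v), w.IsCycle → g ≤ w.length)
    (hdeg : ∀ v, c + 1 ≤ H.degree v) (hk : 2 * k < g) : c ^ k ≤ Fintype.card W := by
  classical
  obtain ⟨v⟩ := ‹Nonempty W›
  let L : ℕ → Finset W := fun j =>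
    Finset.univ.filter fun w => ∃ p : H.Walk w v, p.IsPath ∧ p.length = j
  have key : ∀ j, j ≤ k → c ^ j ≤ (L j).card := by
    intro j
    induction j with
    | zero =>
      intro _
      simp only [pow_zero]
      apply Finset.card_pos.mpr
      exact ⟨v, by simp only [L, Finset.mem_filter, Finset.mem_univ, true_and]
                   exact ⟨.nil, by simp, rfl⟩⟩
    | succ j ih =>
      intro hj
      have ihj := ih (by omega)
      let N : W → Finset W := fun w => Finset.univ.filter fun x =>
        ∃ (h : H.Adj x w) (p : H.Walk w v), (SimpleGraph.Walk.cons h p).IsPath ∧ p.length = j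
      have hN : ∀ w ∈ L j, c ≤ (N w).card := by
        intro w hw
        simp only [L, Finset.mem_filter, Finset.mem_univ, true_and] at hw
        obtain ⟨p, hp, hpl⟩ := hw
        have hsub : H.neighborFinset w ⊆ insert p.snd (N w) := by
          intro x hx
          rw [SimpleGraph.mem_neighborFinset] at hx
          rw [Finset.mem_insert]
          by_cases hxp : x ∈ p.support
          · left
            have h1 := ge_unique H g hg (p.takeUntil x hxp) (SimpleGraph.Walk.cons hx .nil)
              (hp.takeUntil hxp) (by simp [hx.ne]) (by
                have := p.length_takeUntil_le_length hxp
                simp; omega)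
            have h2 := congrArg SimpleGraph.Walk.snd h1
            rw [SimpleGraph.Walk.snd_takeUntil hx.ne'] at h2
            simpa using h2.symm
          · right
            simp only [N, Finset.mem_filter, Finset.mem_univ, true_and]
            exact ⟨hx.symm, p, hp.cons hxp, hpl⟩
        have h3 := Finset.card_le_card hsub
        have h4 := Finset.card_insert_le p.snd (N w)
        have h5 := hdeg w
        rw [← SimpleGraph.card_neighborFinset_eq_degree] at h5
        omega
      have hdisj : ((L j : Finset W) : Set W).PairwiseDisjoint N := by
        intro a _ b _ hab
        rw [Function.onFun, Finset.disjoint_left]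
        intro x hxa hxb
        simp only [N, Finset.mem_filter, Finset.mem_univ, true_and] at hxa hxb
        obtain ⟨ha, p, hp, hpl⟩ := hxa
        obtain ⟨hb, q, hq, hql⟩ := hxb
        have h1 := ge_unique H g hg _ _ hp hq (by simp; omega)
        have h2 := congrArg SimpleGraph.Walk.snd h1
        simp at h2
        exact hab h2
      calc c ^ (j + 1) = c ^ j * c := pow_succ _ _
        _ ≤ (L j).card * c := Nat.mul_le_mul_right _ ihj
        _ ≤ ∑ w ∈ L j, (N w).card := by
            simpa using Finset.card_nsmul_le_sum (L j) (fun w => (N w).card) c hN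
        _ = ((L j).biUnion N).card := (Finset.card_biUnion hdisj).symm
        _ ≤ (L (j + 1)).card := by
            apply Finset.card_le_card
            intro x hx
            simp only [Finset.mem_biUnion, N, L, Finset.mem_filter, Finset.mem_univ,
              true_and] at hx ⊢
            obtain ⟨w, _, h, p, hp, hpl⟩ := hx
            exact ⟨_, hp, by simp [hpl]⟩
  exact (key k le_rfl).trans (Finset.card_le_univ _)


/-- Graphs of girth at least `g` and minimum degree at least `6(d+1)` expand:
every nonempty vertex set `X` with `|X| ≤ (1/3) d ^ ⌊(g-1)/2⌋` has `|∂X| > 2|X|`,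
where `∂X` is the set of vertices outside `X` adjacent to some vertex of `X`. -/
theorem girth_expansion {V : Type*} [Fintype V] [DecidableEq V] [Nonempty V]
    (G : SimpleGraph V) [DecidableRel G.Adj] (g d : ℕ) (hd : 1 ≤ d)
    (hgirth : ∀ (v : V) (w : G.Walk v v), w.IsCycle → g ≤ w.length)
    (hmin : 6 * (d + 1) ≤ G.minDegree)
    (X : Finset V) (hX : X.Nonempty) (hXcard : 3 * X.card ≤ d ^ ((g - 1) / 2)) :
    2 * X.card < (Finset.univ.filter fun y => y ∉ X ∧ ∃ x ∈ X, G.Adj x y).card := by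
  classical
  by_contra hcon
  push Not at hcon
  set D := Finset.univ.filter fun y => y ∉ X ∧ ∃ x ∈ X, G.Adj x y with hD
  have hXpos : 1 ≤ X.card := hX.card_pos
  have hk : (g - 1) / 2 ≠ 0 := by
    intro h0
    rw [h0] at hXcard
    simp at hXcard; omega
  have hYcard : (X ∪ D).card ≤ 3 * X.card := by
    have := Finset.card_union_le X D
    omega
  have hsum : 2 * (d + 1) * (X ∪ D).card
      ≤ ∑ v ∈ X ∪ D, ((X ∪ D).filter (G.Adj v)).card := by
    calc 2 * (d + 1) * (X ∪ D).card ≤ X.card * (6 * (d + 1)) := by nlinarith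
      _ ≤ ∑ v ∈ X, ((X ∪ D).filter (G.Adj v)).card := by
        have := Finset.card_nsmul_le_sum X (fun v => ((X ∪ D).filter (G.Adj v)).card)
          (6 * (d + 1)) (by
            intro v hv
            refine (hmin.trans (G.minDegree_le_degree v)).trans ?_
            rw [← SimpleGraph.card_neighborFinset_eq_degree]
            apply Finset.card_le_card
            intro y hy
            rw [SimpleGraph.mem_neighborFinset] at hy
            simp only [Finset.mem_filter, Finset.mem_union, hD, Finset.mem_univ, true_and]
            refine ⟨?_, hy⟩
            by_cases hyX : y ∈ X
            · exact Or.inl hyX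
            · exact Or.inr ⟨hyX, v, hv, hy⟩)
        simpa using this
      _ ≤ _ := Finset.sum_le_sum_of_subset Finset.subset_union_left
  obtain ⟨T, hTY, hTne, hTdeg⟩ := ge_peel G (d + 1) (by omega) (X ∪ D)
    (hX.mono Finset.subset_union_left) hsum
  have : Nonempty (T : Set V) := hTne.to_subtype
  have hm := ge_moore (G.induce (T : Set V)) g (d + 1) ((g - 1) / 2)
    (by
      intro v w hw
      have := hgirth _ (w.map (SimpleGraph.Embedding.induce (G := G) (T : Set V)).toHom)
        (hw.map (SimpleGraph.Embedding.induce (G := G) (T : Set V)).injective)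
      rwa [SimpleGraph.Walk.length_map] at this)
    (by
      intro v
      refine (hTdeg v.1 v.2).trans ?_
      rw [← SimpleGraph.card_neighborFinset_eq_degree]
      rw [← Finset.card_map (Function.Embedding.subtype _)]
      apply Finset.card_le_card
      intro y hy
      rw [Finset.mem_filter] at hy
      rw [Finset.mem_map]
      exact ⟨⟨y, hy.1⟩, by simpa using hy.2, rfl⟩)
    (by omega)
  have hTc : Fintype.card (T : Set V) = T.card := by simp
  have h1 := Finset.card_le_card hTY
  have h2 : d ^ ((g - 1) / 2) < (d + 1) ^ ((g - 1) / 2) := Nat.pow_lt_pow_left (by omega) hk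
  omega
end

section
/- Let H be a vertex-critical graph of chromatic number d ≥ 3 and let C be an even cycle in H. Then H contains an odd (non-bipartite) θ-graph as a subgraph which contains C. -/
/-- `G` is a θ-graph: two distinct vertices joined by three pairwise internally
disjoint paths, at most one of which has length 1, and whose edges and vertices
exhaust `G`. -/
def IsThetaGraph {V : Type*} (G : SimpleGraph V) : Prop :=
  ∃ (u v : V) (p q r : G.Walk u v), u ≠ v ∧
    p.IsPath ∧ q.IsPath ∧ r.IsPath ∧
    (∀ x ∈ p.support, x ∈ q.support → x = u ∨ x = v) ∧
    (∀ x ∈ p.support, x ∈ r.support → x = u ∨ x = v) ∧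
    (∀ x ∈ q.support, x ∈ r.support → x = u ∨ x = v) ∧
    (p.length = 1 → 2 ≤ q.length ∧ 2 ≤ r.length) ∧
    (q.length = 1 → 2 ≤ r.length) ∧
    (∀ x : V, x ∈ p.support ∨ x ∈ q.support ∨ x ∈ r.support) ∧
    (∀ e ∈ G.edgeSet, e ∈ p.edges ∨ e ∈ q.edges ∨ e ∈ r.edges)

namespace EvenCyc
open SimpleGraph Walk

variable {V : Type*} {G : SimpleGraph V}

lemma path_append {u v w : V} {p : G.Walk u v} {q : G.Walk v w} (hp : p.IsPath) (hq : q.IsPath)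
    (h : ∀ x ∈ p.support, x ∈ q.support → x = v) : (p.append q).IsPath := by
  rw [isPath_def, support_append, List.nodup_append']
  refine ⟨hp.support_nodup, hq.support_nodup.tail, ?_⟩
  intro x hx hx'
  have h1 := h x hx (List.mem_of_mem_tail hx')
  subst h1
  have := hq.support_nodup
  rw [← cons_tail_support, List.nodup_cons] at this
  exact this.1 hx'

lemma cycle_two_paths [DecidableEq V] {v u w : V} {C : G.Walk v v} (hC : C.IsCycle)
    (hu : u ∈ C.support) (hw : w ∈ C.support) (huw : u ≠ w) :
    ∃ p q : G.Walk u w, p.IsPath ∧ q.IsPath ∧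
      (∀ x ∈ p.support, x ∈ q.support → x = u ∨ x = w) ∧
      (∀ x, x ∈ C.support ↔ x ∈ p.support ∨ x ∈ q.support) ∧
      (∀ e, e ∈ C.edges ↔ e ∈ p.edges ∨ e ∈ q.edges) ∧
      p.length + q.length = C.length := by
  have hR := hC.rotate hu
  have hw' : w ∈ (C.rotate u hu).support := by simpa using hw
  have hs := take_spec (C.rotate u hu) hw'
  have hsupp : ∀ x, x ∈ C.support ↔ x ∈ (C.rotate u hu).support := by simp
  have hedge : ∀ e, e ∈ C.edges ↔ e ∈ (C.rotate u hu).edges :=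
    fun e => ((C.rotate_edges u hu).mem_iff).symm
  have hlen : (C.rotate u hu).length = C.length := by simp
  generalize (C.rotate u hu).takeUntil w hw' = p at hs
  generalize (C.rotate u hu).dropUntil w hw' = q at hs
  rw [← hs] at hR hsupp hedge hlen
  refine ⟨p, q.reverse, hR.isPath_of_append_left (not_nil_of_ne huw.symm), 
    (hR.isPath_of_append_right (not_nil_of_ne huw)).reverse, ?_, ?_, ?_, ?_⟩
  · intro x hx hx'
    rw [support_reverse, List.mem_reverse] at hx'
    have h2 := hR.support_nodup
    rw [tail_support_append, List.nodup_append'] at h2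
    rw [← cons_tail_support, List.mem_cons] at hx hx'
    rcases hx with h | h
    · exact Or.inl h
    rcases hx' with h' | h'
    · exact Or.inr h'
    exact (h2.2.2 h h').elim
  · intro x; rw [hsupp, mem_support_append_iff]; simp
  · intro x; rw [hedge, edges_append]; simp
  · simpa using hlen

lemma not_path_decomp [DecidableEq V] {u v : V} (p : G.Walk u v) (h : ¬ p.IsPath) :
    ∃ (x : V) (a : G.Walk u x) (c : G.Walk x x) (b : G.Walk x v),
      0 < c.length ∧ a.length + c.length + b.length = p.length := by
  induction p with
  | nil => exact (h IsPath.nil).elim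
  | @cons u w v hadj p ih =>
    by_cases hu : u ∈ p.support
    · refine ⟨u, nil, cons hadj (p.takeUntil u hu), p.dropUntil u hu, by simp, ?_⟩
      have := congrArg Walk.length (take_spec p hu)
      rw [length_append] at this
      simp; omega
    · have : ¬ p.IsPath := fun hp => h ((cons_isPath_iff _ _).2 ⟨hp, hu⟩)
      obtain ⟨x, a, c, b, hc, hl⟩ := ih this
      exact ⟨x, cons hadj a, c, b, hc, by simp; omega⟩

lemma exists_odd_cycle [DecidableEq V] (n : ℕ) : ∀ {u : V} (w : G.Walk u u), w.length = n →
    Odd w.length → ∃ (x : V) (c : G.Walk x x), c.IsCycle ∧ Odd c.length := by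
  induction n using Nat.strong_induction_on with
  | _ n ih =>
    intro u w hn hodd
    cases w with
    | nil => simp at hodd
    | @cons _ y _ h p =>
      by_cases hp : p.IsPath
      · by_cases he : s(u, y) ∈ p.edges
        · rw [Sym2.eq_swap] at he
          have := hp.length_eq_one_of_mem_edges he
          simp [this] at hodd
          exact absurd hodd (by decide)
        · exact ⟨u, cons h p, (cons_isCycle_iff _ _).2 ⟨hp, he⟩, hodd⟩
      · obtain ⟨x, a, c, b, hc, hl⟩ := not_path_decomp p hp
        rw [length_cons] at hn hodd
        by_cases hco : Odd c.length
        · exact ih c.length (by omega) c rfl hco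
        · refine ih (cons h (a.append b)).length (by simp; omega) _ rfl ?_
          rw [length_cons, length_append]
          rw [Nat.odd_iff] at *; omega

lemma path_col [DecidableEq V] {u v : V} (p : G.Walk u v) (hp : p.IsPath) :
    ∃ col : V → Bool, ∀ x y, s(x, y) ∈ p.edges → col x ≠ col y := by
  induction p with
  | nil => exact ⟨fun _ => true, by simp⟩
  | @cons u w v hadj p ih =>
    rw [cons_isPath_iff] at hp
    obtain ⟨col, hcol⟩ := ih hp.1
    refine ⟨Function.update col u (!col w), ?_⟩
    intro x y hxy
    have hwu : w ≠ u := hadj.ne'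
    rw [edges_cons, List.mem_cons] at hxy
    rcases hxy with h | h
    · rcases Sym2.eq_iff.1 h with ⟨rfl, rfl⟩ | ⟨rfl, rfl⟩ <;> simp [Function.update, hwu]
    · have hx := p.fst_mem_support_of_mem_edges h
      have hy := p.snd_mem_support_of_mem_edges h
      have hx' : x ≠ u := by rintro rfl; exact hp.2 hx
      have hy' : y ≠ u := by rintro rfl; exact hp.2 hy
      simpa [Function.update, hx', hy'] using hcol x y h

lemma col_parity (col : V → Bool) {u v : V} (p : G.Walk u v)
    (h : ∀ x y, s(x, y) ∈ p.edges → col x ≠ col y) : Odd p.length ↔ col u ≠ col v := by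
  induction p with
  | nil => simp
  | @cons u w v hadj p ih =>
    have h1 := h u w (by simp)
    have h2 := ih (fun x y hxy => h x y (by simp [hxy]))
    rw [length_cons, Nat.odd_add_one, h2]
    revert h1; cases col u <;> cases col w <;> cases col v <;> simp

lemma cycle_col [DecidableEq V] {v : V} (C : G.Walk v v) (hC : C.IsCycle) (he : Even C.length) :
    ∃ col : V → Bool, ∀ x y, s(x, y) ∈ C.edges → col x ≠ col y := by
  cases C with
  | nil => exact (not_isCycle_nil hC).elim
  | @cons _ w _ h p =>
    rw [cons_isCycle_iff] at hC
    obtain ⟨col, hcol⟩ := path_col p hC.1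
    have := col_parity col p hcol
    rw [length_cons, Nat.even_add_one, Nat.not_even_iff_odd] at he
    have h3 := this.1 he
    refine ⟨col, fun x y hxy => ?_⟩
    rw [edges_cons, List.mem_cons] at hxy
    rcases hxy with h | h
    · rcases Sym2.eq_iff.1 h with ⟨rfl, rfl⟩ | ⟨rfl, rfl⟩
      · exact h3.symm
      · exact h3
    · exact hcol x y h

lemma clean [DecidableEq V] (S U : Set V) (n : ℕ) : ∀ {z t : V} (W : G.Walk z t), W.length = n →
    z ∈ S → t ∈ U → ∃ (z' t' : V) (R : G.Walk z' t'), R.IsPath ∧ z' ∈ S ∧ t' ∈ U ∧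
      R.length ≤ n ∧ (∀ x ∈ R.support, x ∈ W.support) ∧
      (∀ x ∈ R.support, x ∈ S → x = z') ∧ (∀ x ∈ R.support, x ∈ U → x = t') := by
  induction n using Nat.strong_induction_on with
  | _ n ih =>
    intro z t W hn hz ht
    by_cases h1 : ∃ x ∈ W.bypass.support, x ∈ S ∧ x ≠ z
    · obtain ⟨x, hx, hxS, hxz⟩ := h1
      have hl := length_dropUntil_lt_length hx hxz
      have hb := W.length_bypass_le_length
      obtain ⟨z', t', R, a, b, c, d, e, f⟩ := ih _ (by omega) (W.bypass.dropUntil x hx) rfl hxS ht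
      exact ⟨z', t', R, a, b, c, by omega, fun y hy => W.support_bypass_subset_support
        (W.bypass.support_dropUntil_subset_support hx (e y hy)), f⟩
    by_cases h2 : ∃ x ∈ W.bypass.support, x ∈ U ∧ x ≠ t
    · obtain ⟨x, hx, hxS, hxz⟩ := h2
      have hl := length_takeUntil_lt_length hx hxz
      have hb := W.length_bypass_le_length
      obtain ⟨z', t', R, a, b, c, d, e, f⟩ := ih _ (by omega) (W.bypass.takeUntil x hx) rfl hz hxS
      exact ⟨z', t', R, a, b, c, by omega, fun y hy => W.support_bypass_subset_support
        (W.bypass.support_takeUntil_subset_support hx (e y hy)), f⟩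
    push Not at h1 h2
    exact ⟨z, t, W.bypass, W.bypass_isPath, hz, ht, hn ▸ W.length_bypass_le_length,
      fun y hy => W.support_bypass_subset_support hy, h1, h2⟩

lemma conn [DecidableEq V] (d : ℕ) (hd : 3 ≤ d) (hχ : G.chromaticNumber = (d : ℕ∞))
    (hcrit : ∀ v : V, (G.induce {w | w ≠ v}).chromaticNumber < (d : ℕ∞))
    (y a b : V) (ha : a ≠ y) (hb : b ≠ y) : ∃ W : G.Walk a b, y ∉ W.support := by
  classical
  by_contra hno
  have hcol : ∀ v : V, ∃ f : V → Fin (d - 1), ∀ x z, x ≠ v → z ≠ v → G.Adj x z → f x ≠ f z := by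
    intro v
    have h1 : (G.induce {w | w ≠ v}).chromaticNumber ≤ ((d - 1 : ℕ) : ℕ∞) := by
      apply Order.le_of_lt_add_one
      have : ((d - 1 : ℕ) : ℕ∞) + 1 = (d : ℕ∞) := by
        have : d = (d - 1) + 1 := by omega
        conv_rhs => rw [this]
        simp
      rw [this]; exact hcrit v
    rw [chromaticNumber_le_iff_colorable] at h1
    obtain ⟨c⟩ := h1
    refine ⟨fun x => if h : x ≠ v then c ⟨x, h⟩ else ⟨0, by omega⟩, ?_⟩
    intro x z hx hz hxz
    simp only [dif_pos hx, dif_pos hz]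
    exact c.valid (by simpa using hxz)
  obtain ⟨f1, hf1⟩ := hcol b
  obtain ⟨f2, hf2⟩ := hcol a
  let A : Set V := {x | ∃ W : G.Walk a x, y ∉ W.support}
  have haA : a ∈ A := ⟨nil, by simpa using ha.symm⟩
  have hbA : b ∉ A := hno
  have hyA : y ∉ A := fun ⟨W, hW⟩ => hW W.end_mem_support
  have hAdj : ∀ x z, x ∈ A → G.Adj x z → z ≠ y → z ∈ A := by
    rintro x z ⟨W, hW⟩ hxz hz
    exact ⟨W.concat hxz, by simp [support_concat, hW, hz.symm]⟩
  let σ := Equiv.swap (f2 y) (f1 y)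
  have hσ : σ (f2 y) = f1 y := Equiv.swap_apply_left _ _
  let g : V → Fin (d - 1) := fun x => if x ∈ A then f1 x else σ (f2 x)
  have hg1 : ∀ x, x ∈ A → g x = f1 x := fun x h => if_pos h
  have hg2 : ∀ x, x ∉ A → g x = σ (f2 x) := fun x h => if_neg h
  have hgy : g y = f1 y := by rw [hg2 y hyA, hσ]
  have key : ∀ x z, G.Adj x z → x ∈ A → g x ≠ g z := by
    intro x z hxz hx
    have hxb : x ≠ b := fun h => hbA (h ▸ hx)
    rw [hg1 x hx]
    by_cases hz : z = y
    · rw [hz, hgy]; exact hf1 _ _ hxb hb.symm (hz ▸ hxz)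
    · have hzA := hAdj x z hx hxz hz
      rw [hg1 z hzA]
      exact hf1 _ _ hxb (fun h => hbA (h ▸ hzA)) hxz
  have hG : G.Colorable (d - 1) := by
    refine ⟨Coloring.mk g ?_⟩
    intro x z hxz
    by_cases hx : x ∈ A
    · exact key x z hxz hx
    by_cases hz : z ∈ A
    · exact (key z x hxz.symm hz).symm
    rw [hg2 x hx, hg2 z hz]
    exact fun h => hf2 x z (fun h => hx (h ▸ haA)) (fun h => hz (h ▸ haA)) hxz (σ.injective h)
  have := hG.chromaticNumber_le
  rw [hχ] at this
  norm_cast at this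
  omega

lemma lift_walk (Γ : G.Subgraph) {u v : V} (p : G.Walk u v) (h : p.toSubgraph ≤ Γ)
    (hu : u ∈ Γ.verts) (hv : v ∈ Γ.verts) :
    ∃ p' : Γ.coe.Walk ⟨u, hu⟩ ⟨v, hv⟩, p'.map Γ.hom = p := by
  induction p with
  | nil => exact ⟨nil, rfl⟩
  | @cons u w v hadj p ih =>
    rw [Walk.toSubgraph, sup_le_iff] at h
    have hw : w ∈ Γ.verts := h.2.1 (by simp)
    obtain ⟨p', hp'⟩ := ih h.2 hw hv
    have ha : Γ.Adj u w := h.1.2 (by simp)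
    have ha' : Γ.coe.Adj ⟨u, hu⟩ ⟨w, hw⟩ := ha
    refine ⟨cons ha' p', ?_⟩
    rw [map_cons]
    exact congrArg (cons hadj) hp'

lemma lift_walk' (Γ : G.Subgraph) {u v : V} (p : G.Walk u v) (hp : p.IsPath)
    (h : p.toSubgraph ≤ Γ) (hu : u ∈ Γ.verts) (hv : v ∈ Γ.verts) :
    ∃ p' : Γ.coe.Walk ⟨u, hu⟩ ⟨v, hv⟩, p'.IsPath ∧ p'.length = p.length ∧
      (∀ x, x ∈ p'.support ↔ x.1 ∈ p.support) ∧
      (∀ e, e ∈ p'.edges ↔ e.map Subtype.val ∈ p.edges) := by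
  obtain ⟨p', hp'⟩ := lift_walk Γ p h hu hv
  have h1 : p'.length = p.length :=
    (length_map Γ.hom p').symm.trans (congrArg Walk.length hp')
  have h2 : p'.support.map Subtype.val = p.support :=
    (Walk.support_map Γ.hom p').symm.trans (congrArg Walk.support hp')
  have h3 : p'.edges.map (Sym2.map Subtype.val) = p.edges :=
    (Walk.edges_map Γ.hom p').symm.trans (congrArg Walk.edges hp')
  refine ⟨p', ?_, h1, ?_, ?_⟩
  · rw [← hp'] at hp; exact hp.of_map
  · intro x
    rw [← h2]
    exact (List.mem_map_of_injective Subtype.val_injective).symm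
  · intro e
    rw [← h3]
    exact (List.mem_map_of_injective (Sym2.map.injective Subtype.val_injective)).symm

lemma paths_cycle {u v : V} {p q : G.Walk u v} (hp : p.IsPath) (hq : q.IsPath) (huv : u ≠ v)
    (hd : ∀ x ∈ p.support, x ∈ q.support → x = u ∨ x = v) (hodd : Odd (p.length + q.length)) :
    (p.append q.reverse).IsCycle := by
  have h1 : p.length ≠ 0 := fun h => huv (eq_of_length_eq_zero h)
  have h2 : q.length ≠ 0 := fun h => huv (eq_of_length_eq_zero h)
  refine hp.isCycle_append hq.reverse ?_ ?_
  · intro x hx hx'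
    have hpn := hp.support_nodup
    have hqn := hq.reverse.support_nodup
    rw [← cons_tail_support, List.nodup_cons] at hpn hqn
    have hxq := List.mem_of_mem_tail hx'
    rw [support_reverse, List.mem_reverse] at hxq
    rcases hd x (List.mem_of_mem_tail hx) hxq with rfl | rfl
    · exact hpn.1 hx
    · exact hqn.1 hx'
  · rw [length_reverse]
    rw [Nat.odd_iff] at hodd
    omega

lemma theta [DecidableEq V] {v : V} (C : G.Walk v v) (hC : C.IsCycle)
    (col : V → Bool) (hcol : ∀ x y, s(x, y) ∈ C.edges → col x ≠ col y)
    {a b : V} (ha : a ∈ C.support) (hb : b ∈ C.support) (p : G.Walk a b) (hp : p.IsPath)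
    (hint : ∀ x ∈ p.support, x ∈ C.support → x = a ∨ x = b)
    (hpar : ¬ (Odd p.length ↔ col a ≠ col b)) :
    ∃ Γ : G.Subgraph, IsThetaGraph Γ.coe ∧
      (∃ (x : Γ.verts) (w : Γ.coe.Walk x x), w.IsCycle ∧ Odd w.length) ∧
      (∀ e ∈ C.edges, e ∈ Γ.edgeSet) := by
  have hab : a ≠ b := by
    rintro rfl
    apply hpar
    rw [isPath_iff_nil] at hp
    simp [hp.eq_nil]
  obtain ⟨q, r, hq, hr, hqr, hsup, hedge, hlen⟩ := cycle_two_paths hC ha hb hab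
  have hqp := col_parity col q (fun x y h => hcol x y ((hedge _).2 (Or.inl h)))
  have hrp := col_parity col r (fun x y h => hcol x y ((hedge _).2 (Or.inr h)))
  rw [← hqp] at hpar hrp
  have hp0 : p.length ≠ 0 := fun h => hab (eq_of_length_eq_zero h)
  have hq0 : q.length ≠ 0 := fun h => hab (eq_of_length_eq_zero h)
  have hr0 : r.length ≠ 0 := fun h => hab (eq_of_length_eq_zero h)
  have hC3 := hC.three_le_length
  rw [Nat.odd_iff, Nat.odd_iff] at hpar hrp
  let Γ : G.Subgraph := p.toSubgraph ⊔ q.toSubgraph ⊔ r.toSubgraph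
  have hpΓ : p.toSubgraph ≤ Γ := le_sup_left.trans le_sup_left
  have hqΓ : q.toSubgraph ≤ Γ := le_sup_right.trans le_sup_left
  have hrΓ : r.toSubgraph ≤ Γ := le_sup_right
  have haΓ : a ∈ Γ.verts := hpΓ.1 (by simp)
  have hbΓ : b ∈ Γ.verts := hpΓ.1 (by simp)
  have hvΓ : ∀ x, x ∈ Γ.verts → x ∈ p.support ∨ x ∈ q.support ∨ x ∈ r.support := by
    intro x hx
    simpa [Γ, or_assoc] using hx
  have heΓ : ∀ e, e ∈ Γ.edgeSet ↔ e ∈ p.edges ∨ e ∈ q.edges ∨ e ∈ r.edges := by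
    intro e
    simp [Γ, or_assoc]
  obtain ⟨p', p1, p2, p3, p4⟩ := lift_walk' Γ p hp hpΓ haΓ hbΓ
  obtain ⟨q', q1, q2, q3, q4⟩ := lift_walk' Γ q hq hqΓ haΓ hbΓ
  obtain ⟨r', r1, r2, r3, r4⟩ := lift_walk' Γ r hr hrΓ haΓ hbΓ
  have hab' : (⟨a, haΓ⟩ : Γ.verts) ≠ ⟨b, hbΓ⟩ := fun h => hab (congrArg Subtype.val h)
  have dpq : ∀ x ∈ p'.support, x ∈ q'.support → x = ⟨a, haΓ⟩ ∨ x = ⟨b, hbΓ⟩ := by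
    intro x h1 h2
    rw [Subtype.ext_iff, Subtype.ext_iff]
    exact hint _ ((p3 x).1 h1) ((hsup _).2 (Or.inl ((q3 x).1 h2)))
  refine ⟨Γ, ⟨⟨a, haΓ⟩, ⟨b, hbΓ⟩, p', q', r', hab', p1, q1, r1, dpq, ?_, ?_, ?_, ?_, ?_, ?_⟩, 
    ⟨_, p'.append q'.reverse, paths_cycle p1 q1 hab' dpq ?_, ?_⟩, ?_⟩
  · intro x h1 h2
    rw [Subtype.ext_iff, Subtype.ext_iff]
    exact hint _ ((p3 x).1 h1) ((hsup _).2 (Or.inr ((r3 x).1 h2)))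
  · intro x h1 h2
    rw [Subtype.ext_iff, Subtype.ext_iff]
    exact hqr _ ((q3 x).1 h1) ((r3 x).1 h2)
  · omega
  · omega
  · intro x
    rw [p3, q3, r3]; exact hvΓ _ x.2
  · intro e he
    rw [p4, q4, r4, ← heΓ]
    induction e with
    | _ x y => exact he
  · rw [Nat.odd_iff]; omega
  · rw [length_append, length_reverse, Nat.odd_iff]; omega
  · intro e he
    rw [heΓ]; exact Or.inr ((hedge e).1 he)

lemma all_consistent [DecidableEq V] (K : V → Prop) (col : V → Bool)
    (h : ∀ (a b : V) (p : G.Walk a b), K a → K b → p.IsPath →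
      (∀ x ∈ p.support, K x → x = a ∨ x = b) → (Odd p.length ↔ col a ≠ col b)) (n : ℕ) :
    ∀ (a b : V) (p : G.Walk a b), p.length = n → K a → K b → p.IsPath →
      (Odd p.length ↔ col a ≠ col b) := by
  induction n using Nat.strong_induction_on with
  | _ n ih =>
    intro a b p hn ha hb hp
    by_cases hx : ∃ x ∈ p.support, K x ∧ x ≠ a ∧ x ≠ b
    · obtain ⟨x, hx, hK, hxa, hxb⟩ := hx
      have h1 := length_takeUntil_lt_length hx hxb
      have h2 := length_dropUntil_lt_length hx hxa
      have i1 := ih _ (hn ▸ h1) _ _ _ rfl ha hK (hp.takeUntil hx)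
      have i2 := ih _ (hn ▸ h2) _ _ _ rfl hK hb (hp.dropUntil hx)
      have := congrArg Walk.length (take_spec p hx)
      rw [length_append] at this
      rw [← this, Nat.odd_add, i1, ← Nat.not_odd_iff_even, i2]
      cases col a <;> cases col b <;> cases col x <;> simp
    · push Not at hx
      refine h a b p ha hb hp fun x hx1 hx2 => ?_
      by_cases hxa : x = a
      · exact Or.inl hxa
      · exact Or.inr (hx x hx1 hx2 hxa)

lemma no_lollipop [DecidableEq V] (K : V → Prop) (col : V → Bool)
    (hK2 : ∀ y, ∃ c, K c ∧ c ≠ y)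
    (hcon : ∀ (a b : V) (p : G.Walk a b), K a → K b → p.IsPath → (Odd p.length ↔ col a ≠ col b))
    (hconn : ∀ y a b, a ≠ y → b ≠ y → ∃ W : G.Walk a b, y ∉ W.support) (n : ℕ) :
    ∀ (v : V) (D : G.Walk v v) (z c : V) (T : G.Walk z c), D.IsCycle → Odd D.length →
      z ∈ D.support → K c → T.length = n → False := by
  induction n using Nat.strong_induction_on with
  | _ n ih =>
    intro v D z₀ c₀ T₀ hD hDo hz₀ hc₀ hn
    obtain ⟨y, c, T, hT, hyD, hcK, hTn, -, hTD, -⟩ :=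
      clean {x | x ∈ D.support} {x | K x} n T₀ hn hz₀ hc₀
    simp only [Set.mem_ofPred_eq] at hyD hcK hTD
    obtain ⟨z₁, hz₁D, hz₁y⟩ : ∃ z ∈ D.support, z ≠ y := by
      by_contra hno
      push Not at hno
      cases D with
      | nil => exact not_isCycle_nil hD
      | cons h p =>
        exact h.ne ((hno _ (by simp)).trans (hno _ (by simp)).symm)
    obtain ⟨c₁, hc₁K, hc₁y⟩ := hK2 y
    obtain ⟨W, hW⟩ := hconn y z₁ c₁ hz₁y hc₁y
    obtain ⟨z, t, R, hR, hz, ht, -, hRW, hRS, hRU⟩ :=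
      clean {x | x ∈ D.support ∧ x ≠ y} {x | (x ∈ T.support ∨ K x) ∧ x ≠ y} _ W rfl
        ⟨hz₁D, hz₁y⟩ ⟨Or.inr hc₁K, hc₁y⟩
    simp only [Set.mem_ofPred_eq] at hz ht hRS hRU
    have hRy : ∀ x ∈ R.support, x ≠ y := fun x hx h => hW (h ▸ hRW x hx)
    obtain ⟨p, q, hp, hq, -, hsup, -, hlen⟩ := cycle_two_paths hD hyD hz.1 hz.2.symm
    -- choose any parity
    have choose : ∀ m : ℕ, ∃ P : G.Walk y z, P.IsPath ∧ (∀ x ∈ P.support, x ∈ D.support) ∧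
        Odd (P.length + m) := by
      intro m
      by_cases hpm : Odd (p.length + m)
      · exact ⟨p, hp, fun x hx => (hsup x).2 (Or.inl hx), hpm⟩
      · refine ⟨q, hq, fun x hx => (hsup x).2 (Or.inr hx), ?_⟩
        rw [← hlen] at hDo
        rw [Nat.odd_iff] at *
        omega
    have hPR : ∀ P : G.Walk y z, P.IsPath → (∀ x ∈ P.support, x ∈ D.support) →
        (P.append R).IsPath := fun P hP hPD => path_append hP hR
          fun x hx hx' => hRS x hx' ⟨hPD x hx, hRy x hx'⟩
    by_cases htT : t ∈ T.support
    · obtain ⟨P, hP, hPD, hPo⟩ := choose (R.length + (T.takeUntil t htT).length)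
      have hcyc := paths_cycle (hPR P hP hPD) (hT.takeUntil htT) ht.2.symm (by
        intro x hx hx'
        have hxT := T.support_takeUntil_subset_support htT hx'
        rw [mem_support_append_iff] at hx
        rcases hx with hx | hx
        · exact Or.inl (hTD x hxT (hPD x hx))
        · exact Or.inr (hRU x hx ⟨Or.inl hxT, hRy x hx⟩)) (by
        rw [length_append, add_assoc]; exact hPo)
      have hlt := length_dropUntil_lt_length htT ht.2
      refine ih (T.dropUntil t htT).length (by omega) y _ t c (T.dropUntil t htT) hcyc ?_ ?_ hcK rfl
      · rw [length_append, length_append, length_reverse, add_assoc]; exact hPo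
      · rw [mem_support_append_iff]; left; simp
    · have htK : K t := ht.1.resolve_left htT
      have hfin : ∀ P : G.Walk y z, P.IsPath → (∀ x ∈ P.support, x ∈ D.support) →
          (Odd (T.length + (P.length + R.length)) ↔ col c ≠ col t) := by
        intro P hP hPD
        have := hcon c t (T.reverse.append (P.append R)) hcK htK
          (path_append hT.reverse (hPR P hP hPD) (by
            intro x hx hx'
            rw [support_reverse, List.mem_reverse] at hx
            rw [mem_support_append_iff] at hx'
            rcases hx' with hx' | hx'
            · exact hTD x hx (hPD x hx')
            · exact (htT ((hRU x hx' ⟨Or.inl hx, hRy x hx'⟩) ▸ hx)).elim))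
        rwa [length_append, length_append, length_reverse] at this
      obtain ⟨P, hP, hPD, hPo⟩ := choose 0
      obtain ⟨Q, hQ, hQD, hQo⟩ := choose 1
      have h1 := hfin P hP hPD
      rw [← hfin Q hQ hQD] at h1
      rw [Nat.odd_iff] at *
      rw [Nat.odd_iff] at *
      omega

end EvenCyc

/-- In a vertex-critical graph of chromatic number `d ≥ 3`, every even cycle `C` is
contained in an odd (non-bipartite) θ-subgraph. -/
theorem even_cycle_in_odd_theta {V : Type*} [Fintype V] (H : SimpleGraph V)
    (d : ℕ) (hd : 3 ≤ d) (hχ : H.chromaticNumber = (d : ℕ∞))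
    (hcrit : ∀ v : V, (H.induce {w | w ≠ v}).chromaticNumber < (d : ℕ∞))
    (v : V) (C : H.Walk v v) (hC : C.IsCycle) (hCeven : Even C.length) :
    ∃ Γ : H.Subgraph, IsThetaGraph Γ.coe ∧
      (∃ (x : Γ.verts) (w : Γ.coe.Walk x x), w.IsCycle ∧ Odd w.length) ∧
      (∀ e ∈ C.edges, e ∈ Γ.edgeSet) := by
  classical
  by_contra hno
  obtain ⟨col, hcol⟩ := EvenCyc.cycle_col C hC hCeven
  have hear : ∀ (a b : V) (p : H.Walk a b), a ∈ C.support → b ∈ C.support → p.IsPath →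
      (∀ x ∈ p.support, x ∈ C.support → x = a ∨ x = b) → (Odd p.length ↔ col a ≠ col b) := by
    intro a b p ha hb hp hint
    by_contra hpar
    exact hno (EvenCyc.theta C hC col hcol ha hb p hp hint hpar)
  have hcon : ∀ (a b : V) (p : H.Walk a b), a ∈ C.support → b ∈ C.support → p.IsPath →
      (Odd p.length ↔ col a ≠ col b) := fun a b p ha hb hp =>
    EvenCyc.all_consistent (fun x => x ∈ C.support) col hear _ a b p rfl ha hb hp
  have hconn := EvenCyc.conn d hd hχ hcrit
  have hK2 : ∀ y, ∃ c, c ∈ C.support ∧ c ≠ y := by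
    intro y
    by_contra hno
    push Not at hno
    cases C with
    | nil => exact SimpleGraph.Walk.not_isCycle_nil hC
    | cons h p => exact h.ne ((hno _ (by simp)).trans (hno _ (by simp)).symm)
  have hnb : ¬ H.Colorable 2 := by
    intro h
    have := h.chromaticNumber_le
    rw [hχ] at this
    norm_cast at this
    omega
  rw [SimpleGraph.two_colorable_iff_forall_loop_even] at hnb
  push Not at hnb
  obtain ⟨u, w, hw⟩ := hnb
  obtain ⟨x, D, hD, hDo⟩ := EvenCyc.exists_odd_cycle _ w rfl (by simpa using hw)
  have hlol := EvenCyc.no_lollipop (fun x => x ∈ C.support) col hK2 hcon hconn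
  by_cases hvD : v ∈ D.support
  · exact hlol 0 x D v v SimpleGraph.Walk.nil hD hDo hvD (by simp) rfl
  · obtain ⟨c, hc, hcv⟩ := hK2 v
    obtain ⟨T, -⟩ := hconn v x c (fun h => hvD (h ▸ D.start_mem_support)) hcv
    exact hlol _ x D x c T hD hDo D.start_mem_support hc rfl
end

section
/- For every k ≥ 2 and n ≥ 1, every finite simple graph on n vertices with no cycle of length exactly 2k has at most 8k·n^{1+1/k} edges. -/
lemma ec_cycle_of_fun {V : Type*} (G : SimpleGraph V) (n : ℕ) (hn : 3 ≤ n) (q : ℕ → V)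
    (hinj : ∀ i j, i < n → j < n → q i = q j → i = j)
    (hadj : ∀ i, i + 1 < n → G.Adj (q i) (q (i+1))) (hlast : G.Adj (q (n-1)) (q 0)) :
    ∃ (v : V) (w : G.Walk v v), w.IsCycle ∧ w.length = n := by
  have key : ∀ t, t < n → ∃ w : G.Walk (q 0) (q t), w.IsPath ∧ w.length = t ∧
      (∀ y ∈ w.support, ∃ i, i ≤ t ∧ y = q i) ∧
      (∀ y ∈ w.edges, ∃ i, i < t ∧ y = s(q i, q (i+1))) := by
    intro t
    induction t with
    | zero => intro _; exact ⟨SimpleGraph.Walk.nil, by simp⟩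
    | succ t ih =>
      intro ht
      obtain ⟨w, h1, h2, h3, h4⟩ := ih (by omega)
      refine ⟨w.concat (hadj t ht), ?_, by simp [h2], ?_, ?_⟩
      · refine h1.concat ?_ _
        intro hmem
        obtain ⟨i, hi, he⟩ := h3 _ hmem
        have := hinj _ _ ht (by omega) he
        omega
      · intro y hy
        rw [SimpleGraph.Walk.support_concat] at hy
        simp only [List.mem_append, List.mem_singleton] at hy
        rcases hy with hy | hy
        · obtain ⟨i, hi, he⟩ := h3 _ hy
          exact ⟨i, by omega, he⟩
        · exact ⟨t+1, le_rfl, hy⟩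
      · intro y hy
        rw [SimpleGraph.Walk.edges_concat] at hy
        simp only [List.concat_eq_append, List.mem_append, List.mem_singleton] at hy
        rcases hy with hy | hy
        · obtain ⟨i, hi, he⟩ := h4 _ hy
          exact ⟨i, by omega, he⟩
        · exact ⟨t, by omega, hy⟩
  obtain ⟨w, h1, h2, h3, h4⟩ := key (n-1) (by omega)
  refine ⟨q (n-1), SimpleGraph.Walk.cons hlast w, ?_, by simp [h2]; omega⟩
  rw [SimpleGraph.Walk.cons_isCycle_iff]
  refine ⟨h1, fun hmem => ?_⟩
  obtain ⟨i, hi, he⟩ := h4 _ hmem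
  rw [Sym2.eq_iff] at he
  rcases he with ⟨ha, hb⟩ | ⟨ha, hb⟩
  · have := hinj _ _ (by omega) (by omega) ha
    omega
  · have := hinj _ _ (by omega) (by omega) ha
    have := hinj _ _ (by omega) (by omega) hb
    omega

lemma ec_dvd {p a b : ℤ} (h : p ∣ a) (e : b = a) : p ∣ b := e ▸ h

lemma ec_arith (c D : ℤ → Prop) (m r l : ℤ) (hr : 2 ≤ r) (hrm : r + 2 ≤ m)
    (hl : 1 ≤ l) (hlm : l < m) (hD : ∀ x, D (x+1) ↔ ¬ D x) (hcD : ∀ x, c x → D x)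
    (hc : ∃ a, c a) (hb : ∃ b, D b ∧ ¬ c b)
    (H0 : ∀ x, c (x + m) ↔ c x) (H1 : ∀ x, c (x + l) ↔ c x)
    (H2 : r + l ≤ m → ∀ j, 0 ≤ j → j ≤ l - 1 → (c (-j) ↔ c (r + (l-1-j))))
    (H2' : l ≤ r → ∀ j, 0 ≤ j → j ≤ l - 1 → (c j ↔ c (r - (l-1-j))))
    (H3 : ∀ j, 0 ≤ j → j ≤ l - 1 → j ≤ m-r-1 → l-1-j ≤ r-1 → (c (-j) ↔ c (r - (l-1-j))))
    (H4 : ∀ j, 0 ≤ j → j ≤ l - 1 → j ≤ r-1 → l-1-j ≤ m-r-1 → (c j ↔ c (r + (l-1-j)))) :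
    False := by
  let P : AddSubgroup ℤ :=
    { carrier := {p | ∀ x, c (x + p) ↔ c x}
      zero_mem' := by intro x; simp
      add_mem' := by
        intro a b ha hb x
        have := ha x
        have h2 := hb (x + a)
        rw [← add_assoc, h2, this]
      neg_mem' := by
        intro a ha x
        have := ha (x + -a)
        rw [← this]; simp }
  have memP : ∀ p, p ∈ P ↔ ∀ x, c (x + p) ↔ c x := fun p => Iff.rfl
  have hmP : m ∈ P := H0
  have hlP : l ∈ P := H1
  obtain ⟨p0, hp0⟩ := Int.subgroup_cyclic P
  obtain ⟨p, hp, hppos⟩ : ∃ p : ℤ, (∀ q, q ∈ P ↔ p ∣ q) ∧ 0 < p := by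
    have h1 : ∀ q, q ∈ P ↔ p0 ∣ q := by
      intro q; rw [hp0, AddSubgroup.mem_closure_singleton]
      constructor
      · rintro ⟨n, rfl⟩; simp
      · rintro ⟨n, rfl⟩; exact ⟨n, by simp [mul_comm]⟩
    refine ⟨|p0|, fun q => by rw [h1, abs_dvd], ?_⟩
    rw [abs_pos]
    rintro rfl
    have := (h1 m).1 hmP
    simp at this
    omega
  have hpP : p ∈ P := (hp p).2 dvd_rfl
  have hper : ∀ x y, p ∣ x - y → (c x ↔ c y) := by
    intro x y h
    have := (memP _).1 ((hp _).2 h) y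
    simpa using this
  have pl : p ∣ l := (hp _).1 hlP
  have pm : p ∣ m := (hp _).1 hmP
  have hpl : p ≤ l := Int.le_of_dvd (by omega) pl
  have hpml : p ≤ m - l := Int.le_of_dvd (by omega) (dvd_sub pm pl)
  -- 2 not a period
  have h2P : ¬ (2 : ℤ) ∈ P := by
    intro h2
    obtain ⟨a, ha⟩ := hc
    obtain ⟨b, hb1, hb2⟩ := hb
    have hDn : ∀ n : ℕ, ∀ x, (D (x + n) ↔ (if Even n then D x else ¬ D x)) := by
      intro n
      induction n with
      | zero => simp
      | succ n ih =>
        intro x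
        push_cast
        rw [← add_assoc, hD, ih]
        by_cases h : Even n <;> simp [h, Nat.even_add_one]
    have hev : ∀ x y, D x → D y → (2:ℤ) ∣ x - y := by
      have : ∀ (n : ℕ) x, D x → D (x+n) → Even n := by
        intro n x h1 h2
        rw [hDn] at h2
        by_contra h
        simp [h] at h2
        exact h2 h1
      intro x y hx hy
      rcases le_total x y with h | h
      · obtain ⟨n, hn⟩ := Int.eq_ofNat_of_zero_le (sub_nonneg.2 h)
        have := this n x hx (by rw [← hn]; simpa using hy)
        obtain ⟨t, ht⟩ := this
        omega
      · obtain ⟨n, hn⟩ := Int.eq_ofNat_of_zero_le (sub_nonneg.2 h)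
        have := this n y hy (by rw [← hn]; simpa using hx)
        obtain ⟨t, ht⟩ := this
        omega
    have h := hev b a hb1 (hcD a ha)
    have h3 : b - a ∈ P := (hp _).2 (((hp _).1 h2).trans h)
    have := (memP _).1 h3 a
    apply hb2
    simpa [ha] using this
  -- window extension
  have win : ∀ (j0 : ℤ) (x : ℤ), ∃ y, j0 ≤ y ∧ y < j0 + p ∧ p ∣ x - y := by
    intro j0 x
    refine ⟨j0 + (x - j0) % p, ?_, ?_, ?_⟩
    · have := Int.emod_nonneg (x - j0) hppos.ne'
      omega
    · have := Int.emod_lt_of_pos (x - j0) hppos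
      omega
    · have := Int.dvd_self_sub_emod (x := x - j0) (m := p)
      convert this using 1
      ring
  by_cases c1 : r ≤ p
  · have : r - 1 ∈ P := by
      rw [memP]
      intro x
      obtain ⟨j, hj1, hj2, hj3⟩ := win 0 (-x)
      have h := H2 (by omega) j hj1 (by omega)
      rw [hper x (-j) (by exact ec_dvd (dvd_neg.2 hj3) (by ring)), h]
      apply hper
      have := dvd_sub (dvd_neg.2 hj3) pl
      exact ec_dvd this (by ring)
    have := Int.le_of_dvd (by omega) ((hp _).1 this)
    omega
  by_cases c2 : m - r ≤ p
  · have h3 : r + 1 ∈ P := by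
      rw [memP]
      intro x
      obtain ⟨j, hj1, hj2, hj3⟩ := win 0 x
      have h := H2' (by omega) j hj1 (by omega)
      rw [hper x j hj3, h]
      apply hper
      have := dvd_add hj3 pl
      exact ec_dvd this (by ring)
    have := Int.le_of_dvd (by omega) ((hp _).1 (P.sub_mem hmP h3))
    omega
  have R1 : ∀ x, c x ↔ c (r + 1 - x) := by
    intro x
    obtain ⟨j, hj1, hj2, hj3⟩ := win (max 0 (l - r)) (-x)
    have h := H3 j (by omega) (by omega) (by omega) (by omega)
    rw [hper x (-j) (by exact ec_dvd (dvd_neg.2 hj3) (by ring)), h]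
    apply hper
    have := dvd_neg.2 (dvd_add hj3 pl)
    exact ec_dvd this (by ring)
  have R2 : ∀ x, c x ↔ c (r - 1 - x) := by
    intro x
    obtain ⟨j, hj1, hj2, hj3⟩ := win (max 0 (l - (m - r))) x
    have h := H4 j (by omega) (by omega) (by omega) (by omega)
    rw [hper x j hj3, h]
    apply hper
    have := dvd_add hj3 pl
    exact ec_dvd this (by ring)
  apply h2P
  rw [memP]
  intro x
  rw [R1 (x+2), R2 x]
  ring_nf

lemma ec_theta {V : Type*} (R : V → V → Prop) (hsymm : ∀ a b, R a b → R b a) (u : ℤ → V)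
    (m r : ℤ) (hr : 2 ≤ r) (hrm : r + 2 ≤ m)
    (hu : ∀ x y, u x = u y → m ∣ x - y) (hum : ∀ x, u (x + m) = u x)
    (hR : ∀ x, R (u x) (u (x+1))) (hchord : R (u 0) (u r))
    (Y A : V → Prop) (hY : ∀ a b, R a b → (Y b ↔ ¬ Y a)) (hAY : ∀ a, A a → Y a)
    (hA : ∃ x, A (u x)) (hB : ∃ x, Y (u x) ∧ ¬ A (u x))
    (s : ℕ) (hs : Even s) (hs1 : 1 ≤ s) (hsm : (s : ℤ) < m) :
    ∃ p : ℕ → V, (∀ i j, i ≤ s → j ≤ s → p i = p j → i = j) ∧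
      (∀ i, i < s → R (p i) (p (i+1))) ∧ A (p 0) ∧ Y (p s) ∧ ¬ A (p s) ∧ ∀ i, ∃ x, p i = u x := by
  by_contra hno
  have key : ∀ e : ℕ → ℤ, (∀ a b, a ≤ s → b ≤ s → m ∣ e a - e b → a = b) →
      (∀ i, i < s → R (u (e i)) (u (e (i+1)))) → A (u (e 0)) → A (u (e s)) := by
    intro e h1 h2 h3
    by_contra h4
    apply hno
    refine ⟨fun i => u (e i), fun i j hi hj h => h1 i j hi hj (hu _ _ h), h2, h3, ?_, h4, fun i => ⟨e i, rfl⟩⟩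
    have : ∀ i, i ≤ s → (Y (u (e i)) ↔ Even i) := by
      intro i
      induction i with
      | zero => intro _; simp [hAY _ h3]
      | succ i ih =>
        intro hi
        rw [hY _ _ (h2 i (by omega)), ih (by omega), Nat.even_add_one]
    exact (this s le_rfl).2 hs
  have key2 : ∀ e : ℕ → ℤ, (∀ a b, a ≤ s → b ≤ s → m ∣ e a - e b → a = b) →
      (∀ i, i < s → R (u (e i)) (u (e (i+1)))) → (A (u (e 0)) ↔ A (u (e s))) := by
    intro e h1 h2
    refine ⟨key e h1 h2, fun h => ?_⟩
    have := key (fun i => e (s - i)) ?_ ?_ (by simpa using h)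
    · simpa using this
    · intro a b ha hb hab
      have := h1 _ _ (by omega) (by omega) hab
      omega
    · intro i hi
      apply hsymm
      have := h2 (s - (i+1)) (by omega)
      rwa [show s - (i+1) + 1 = s - i by omega] at this
  have small : ∀ x : ℤ, m ∣ x → -m < x → x < m → x = 0 := by
    intro x h h1 h2
    exact Int.eq_zero_of_abs_lt_dvd h (by rw [abs_lt]; exact ⟨h1, h2⟩)
  have hRstep : ∀ x y, (y = x + 1 ∨ y = x - 1 ∨ (x = 0 ∧ y = r)) → R (u x) (u y) := by
    rintro x y (rfl | rfl | ⟨rfl, rfl⟩)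
    · exact hR x
    · apply hsymm; simpa using hR (x - 1)
    · exact hchord
  have arms : ∀ (ε δ : ℤ) (j : ℤ), (ε = 1 ∨ ε = -1) → (δ = 1 ∨ δ = -1) → 0 ≤ j → j ≤ s - 1 →
      (∀ a b, 0 ≤ a → a ≤ j → 0 ≤ b → b ≤ s - 1 - j → ¬ m ∣ ε * a - (r + δ * b)) →
      (A (u (ε * j)) ↔ A (u (r + δ * (s - 1 - j)))) := by
    intro ε δ j hε hδ hj0 hj1 hdis
    have := key2 (fun i => if (i:ℤ) ≤ j then ε * (j - i) else r + δ * (i - j - 1)) ?_ ?_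
    · have hn : ¬ ((s:ℤ) ≤ j) := by omega
      simp only [hn, if_false, Nat.cast_zero, hj0, if_true, sub_zero] at this
      rw [this, show (s:ℤ) - j - 1 = s - 1 - j by ring]
    · intro a b ha hb hab
      by_cases h1 : (a:ℤ) ≤ j <;> by_cases h2 : (b:ℤ) ≤ j <;> simp only [h1, h2, if_true, if_false] at hab
      · have := small _ hab
        rcases hε with rfl | rfl <;> omega
      · exact absurd hab (hdis _ _ (by omega) (by omega) (by omega) (by omega))
      · rw [← dvd_neg, neg_sub] at hab
        exact absurd hab (hdis _ _ (by omega) (by omega) (by omega) (by omega))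
      · have := small _ hab
        rcases hδ with rfl | rfl <;> omega
    · intro i hi
      apply hRstep
      by_cases h1 : (i:ℤ) ≤ j <;> by_cases h2 : ((i+1:ℕ):ℤ) ≤ j <;> simp only [h1, h2, if_true, if_false]
      · rcases hε with rfl | rfl <;> push_cast <;> omega
      · have : (i:ℤ) = j := by push_cast at h2; omega
        right; right
        push_cast
        rw [this]
        constructor <;> ring
      · push_cast at h2; omega
      · rcases hδ with rfl | rfl <;> push_cast <;> omega
  have H1 : ∀ x, A (u (x + s)) ↔ A (u x) := by
    intro x
    have := key2 (fun i => x + i) ?_ ?_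
    · simpa using this.symm
    · intro a b ha hb hab
      have := small _ hab
      omega
    · intro i hi
      apply hRstep
      left; push_cast; ring
  refine ec_arith (fun x => A (u x)) (fun x => Y (u x)) m r s hr hrm (by omega) hsm
    (fun x => hY _ _ (hR x)) (fun x => hAY _) hA hB (fun x => by simp only [hum]) H1 ?_ ?_ ?_ ?_
  · intro h j h0 h1
    have := arms (-1) 1 j (by simp) (by simp) h0 h1 ?_
    · simpa using this
    · intro a b h3 h4 h5 h6 h7
      have := small _ h7
      omega
  · intro h j h0 h1
    have := arms 1 (-1) j (by simp) (by simp) h0 h1 ?_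
    · simpa [sub_eq_add_neg] using this
    · intro a b h3 h4 h5 h6 h7
      have := small _ h7
      omega
  · intro j h0 h1 h8 h9
    have := arms (-1) (-1) j (by simp) (by simp) h0 h1 ?_
    · simpa [sub_eq_add_neg] using this
    · intro a b h3 h4 h5 h6 h7
      have := small _ h7
      omega
  · intro j h0 h1 h8 h9
    have := arms 1 1 j (by simp) (by simp) h0 h1 ?_
    · simpa using this
    · intro a b h3 h4 h5 h6 h7
      have := small _ h7
      omega

open Classical in
noncomputable def ecE {V : Type*} (Q : V → V → Prop) (T : Finset V) : ℕ :=
  ∑ u ∈ T, (T.filter (Q u)).card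

open Classical in
lemma ecE_insert {V : Type*} (Q : V → V → Prop) (hs : ∀ a b, Q a b → Q b a) (hi : ∀ a, ¬ Q a a)
    (T : Finset V) (v : V) (hv : v ∉ T) :
    ecE Q (insert v T) = ecE Q T + 2 * (T.filter (Q v)).card := by
  unfold ecE
  rw [Finset.sum_insert hv, Finset.filter_insert, if_neg (hi v)]
  have : ∀ u ∈ T, ((insert v T).filter (Q u)).card = (T.filter (Q u)).card + if Q v u then 1 else 0 := by
    intro u hu
    rw [Finset.filter_insert]
    by_cases h : Q u v
    · rw [if_pos h, if_pos (hs _ _ h), Finset.card_insert_of_notMem]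
      simp [hv]
    · rw [if_neg h, if_neg (fun h' => h (hs _ _ h'))]; simp
  rw [Finset.sum_congr rfl this, Finset.sum_add_distrib, ← Finset.card_filter]
  ring

open Classical in
lemma ec_mindeg {V : Type*} (Q : V → V → Prop) (hs : ∀ a b, Q a b → Q b a) (hi : ∀ a, ¬ Q a a)
    (D : ℝ) (T : Finset V) (hT : 2 * D * T.card < ecE Q T) :
    ∃ S ⊆ T, S.Nonempty ∧ ∀ v ∈ S, D < (S.filter (Q v)).card := by
  induction T using Finset.strongInduction with
  | H T ih =>
    by_cases h : ∀ v ∈ T, D < (T.filter (Q v)).card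
    · refine ⟨T, subset_rfl, ?_, h⟩
      rw [Finset.nonempty_iff_ne_empty]
      rintro rfl
      simp [ecE] at hT
    · push Not at h
      obtain ⟨v, hv, hd⟩ := h
      have h1 := ecE_insert Q hs hi (T.erase v) v (by simp)
      rw [Finset.insert_erase hv] at h1
      have h2 : ((T.erase v).filter (Q v)).card ≤ (T.filter (Q v)).card := by
        apply Finset.card_le_card
        apply Finset.filter_subset_filter
        exact Finset.erase_subset _ _
      have h3 : ((T.erase v).card : ℝ) + 1 = T.card := by
        exact_mod_cast Finset.card_erase_add_one hv
      obtain ⟨S, hS, hS2⟩ := ih (T.erase v) (Finset.erase_ssubset hv) (by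
        have h1' : (ecE Q T : ℝ) = ecE Q (T.erase v) + 2 * ((T.erase v).filter (Q v)).card := by
          exact_mod_cast h1
        have h2' : (((T.erase v).filter (Q v)).card : ℝ) ≤ (T.filter (Q v)).card := by
          exact_mod_cast h2
        rw [← h3] at hT
        nlinarith)
      exact ⟨S, hS.trans (Finset.erase_subset _ _), hS2⟩

open Classical in
lemma ec_cut {V : Type*} (Q : V → V → Prop) (hs : ∀ a b, Q a b → Q b a) (hi : ∀ a, ¬ Q a a)
    (T : Finset V) : ∃ f : V → Bool, ecE Q T ≤ 2 * ecE (fun a b => Q a b ∧ f a ≠ f b) T := by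
  induction T using Finset.induction_on with
  | empty => exact ⟨fun _ => true, by simp [ecE]⟩
  | insert v T hv ih =>
    obtain ⟨f, hf⟩ := ih
    have key : ∀ b : Bool, (T.filter (Q v)).card ≤ 2 * (T.filter (fun w => Q v w ∧ b ≠ f w)).card →
        ∃ f : V → Bool, ecE Q (insert v T) ≤ 2 * ecE (fun a b => Q a b ∧ f a ≠ f b) (insert v T) := by
      intro b hb
      refine ⟨Function.update f v b, ?_⟩
      rw [ecE_insert Q hs hi T v hv, ecE_insert _ ?_ ?_ T v hv]
      · have e1 : ecE (fun a c => Q a c ∧ Function.update f v b a ≠ Function.update f v b c) T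
            = ecE (fun a b => Q a b ∧ f a ≠ f b) T := by
          unfold ecE
          apply Finset.sum_congr rfl
          intro x hx
          congr 1
          ext y
          simp only [Finset.mem_filter, and_congr_right_iff]
          intro hy
          rw [Function.update_of_ne (by rintro rfl; exact hv hx),
            Function.update_of_ne (by rintro rfl; exact hv hy)]
          exact fun _ => Iff.rfl
        have e2 : ∀ i : DecidablePred
              (fun c => Q v c ∧ Function.update f v b v ≠ Function.update f v b c),
            (@Finset.filter _ (fun c => Q v c ∧ Function.update f v b v ≠ Function.update f v b c) i T)
            = T.filter (fun w => Q v w ∧ b ≠ f w) := by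
          intro i
          ext y
          simp only [Finset.mem_filter, and_congr_right_iff]
          intro hy
          rw [Function.update_self, Function.update_of_ne (by rintro rfl; exact hv hy)]
          exact fun _ => Iff.rfl
        rw [e1, e2]
        omega
      · intro a c h; exact ⟨hs _ _ h.1, h.2.symm⟩
      · intro a h; exact hi a h.1
    have hsum : (T.filter (Q v)).card ≤ (T.filter (fun w => Q v w ∧ true ≠ f w)).card
        + (T.filter (fun w => Q v w ∧ false ≠ f w)).card := by
      refine le_trans (Finset.card_le_card ?_) (Finset.card_union_le _ _)
      intro w hw
      simp only [Finset.mem_filter, Finset.mem_union] at hw ⊢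
      cases h : f w <;> simp [hw]
    rcases le_total (T.filter (fun w => Q v w ∧ true ≠ f w)).card
      (T.filter (fun w => Q v w ∧ false ≠ f w)).card with h | h
    · exact key false (by omega)
    · exact key true (by omega)

open Classical in
lemma ec_long {V : Type*} (R : V → V → Prop) (hs : ∀ a b, R a b → R b a) (Y : V → Prop)
    (hY : ∀ a b, R a b → (Y b ↔ ¬ Y a)) (k : ℕ) (hk : 2 ≤ k) (S : Finset V) (hS : S.Nonempty)
    (hdeg : ∀ v ∈ S, k + 1 ≤ (S.filter (R v)).card) :
    ∃ (u : ℤ → V) (m r : ℤ), 2 ≤ r ∧ r + 2 ≤ m ∧ 2 * k < m ∧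
      (∀ x y, u x = u y → m ∣ x - y) ∧ (∀ x, u (x + m) = u x) ∧
      (∀ x, R (u x) (u (x+1))) ∧ R (u 0) (u r) := by
  let P : ℕ → Prop := fun L => ∃ p : ℕ → V, (∀ i, i ≤ L → p i ∈ S) ∧
    (∀ i j, i ≤ L → j ≤ L → p i = p j → i = j) ∧ (∀ i, i < L → R (p i) (p (i+1)))
  have hex : ∃ L, P L ∧ ¬ P (L+1) := by
    by_contra hcon
    push Not at hcon
    have hall : ∀ L, P L := by
      intro L
      induction L with
      | zero =>
        obtain ⟨x, hx⟩ := hS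
        exact ⟨fun _ => x, fun _ _ => hx, by intros; omega, by intros; omega⟩
      | succ L ih => exact hcon L ih
    obtain ⟨p, h1, h2, _⟩ := hall S.card
    have := Finset.card_le_card_of_injOn (s := Finset.range (S.card + 1)) (t := S) p
      (by intro i hi; simp at hi; exact h1 i (by omega))
      (by intro i hi j hj h; simp at hi hj; exact h2 i j (by omega) (by omega) h)
    simp at this
  obtain ⟨L, ⟨p, h1, h2, h3⟩, hmax⟩ := hex
  have hnb : ∀ w ∈ S, R (p 0) w → ∃ i, i ≤ L ∧ w = p i := by
    intro w hw hR
    by_contra hcon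
    push Not at hcon
    apply hmax
    refine ⟨fun i => Nat.casesOn i w p, ?_, ?_, ?_⟩
    · intro i hi
      cases i with
      | zero => exact hw
      | succ i => exact h1 i (by omega)
    · intro i j hi hj h
      cases i with
      | zero =>
        cases j with
        | zero => rfl
        | succ j => exact absurd h (hcon j (by omega))
      | succ i =>
        cases j with
        | zero => exact absurd h.symm (hcon i (by omega))
        | succ j => rw [h2 i j (by omega) (by omega) h]
    · intro i hi
      cases i with
      | zero => exact hs _ _ hR
      | succ i => exact h3 i (by omega)
  have hpar : ∀ i, i ≤ L → (Y (p i) ↔ (Even i ↔ Y (p 0))) := by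
    intro i
    induction i with
    | zero => intro _; simp
    | succ i ih =>
      intro hi
      rw [hY _ _ (h3 i (by omega)), ih (by omega), Nat.even_add_one]
      tauto
  set I := (Finset.range (L+1)).filter (fun i => R (p 0) (p i)) with hI
  have hIodd : ∀ i ∈ I, i ≤ L ∧ R (p 0) (p i) ∧ ¬ Even i := by
    intro i hi
    rw [hI, Finset.mem_filter, Finset.mem_range] at hi
    refine ⟨by omega, hi.2, ?_⟩
    have := hY _ _ hi.2
    rw [hpar i (by omega)] at this
    tauto
  have hIc : k + 1 ≤ I.card := by
    refine (hdeg (p 0) (h1 0 (by omega))).trans ?_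
    refine le_trans (Finset.card_le_card ?_) (Finset.card_image_le (f := p))
    intro w hw
    rw [Finset.mem_filter] at hw
    obtain ⟨i, hi, rfl⟩ := hnb w hw.1 hw.2
    refine Finset.mem_image_of_mem p ?_
    rw [hI, Finset.mem_filter, Finset.mem_range]
    exact ⟨by omega, hw.2⟩
  have hIne : I.Nonempty := by rw [← Finset.card_pos]; omega
  obtain ⟨M, hMI, hMmax⟩ : ∃ M ∈ I, ∀ i ∈ I, i ≤ M :=
    ⟨I.max' hIne, I.max'_mem hIne, fun i hi => I.le_max' i hi⟩
  obtain ⟨hML, hMR, hModd⟩ := hIodd M hMI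
  have hMk : k + 1 ≤ (M + 1) / 2 := by
    refine hIc.trans ?_
    have := Finset.card_le_card_of_injOn (s := I) (t := Finset.range ((M+1)/2)) (fun i => i / 2)
      (by
        intro i hi
        have a1 := hMmax i hi
        have a2 := (hIodd i hi).2.2
        rw [Nat.not_even_iff] at a2 hModd
        simp
        omega)
      (by
        intro i hi j hj h
        have a1 := (hIodd i hi).2.2
        have a2 := (hIodd j hj).2.2
        rw [Nat.not_even_iff] at a1 a2
        simp at h
        omega)
    simpa using this
  obtain ⟨r, hr⟩ : ((I.erase 1).erase M).Nonempty := by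
    rw [← Finset.card_pos]
    have a1 := Finset.pred_card_le_card_erase (s := I) (a := 1)
    have a2 := Finset.pred_card_le_card_erase (s := I.erase 1) (a := M)
    omega
  simp only [Finset.mem_erase] at hr
  obtain ⟨hrM, hr1, hrI⟩ := hr
  have hrle := hMmax r hrI
  obtain ⟨-, hrR, hrodd⟩ := hIodd r hrI
  have hr0 : r ≠ 0 := by rintro rfl; simp at hrodd
  have hmpos : (0:ℤ) < (M:ℤ) + 1 := by positivity
  refine ⟨fun x => p (x % ((M:ℤ)+1)).toNat, (M:ℤ)+1, r, by omega, by omega, by omega, ?_, ?_, ?_, ?_⟩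
  · intro x y h
    have b1 := Int.emod_nonneg x hmpos.ne'
    have b2 := Int.emod_lt_of_pos x hmpos
    have b3 := Int.emod_nonneg y hmpos.ne'
    have b4 := Int.emod_lt_of_pos y hmpos
    have := h2 _ _ (by omega) (by omega) h
    exact (Int.emod_eq_emod_iff_emod_sub_eq_zero.1 (by omega : x % ((M:ℤ)+1) = y % ((M:ℤ)+1))) |> Int.dvd_of_emod_eq_zero
  · intro x
    simp
  · intro x
    have b1 := Int.emod_nonneg x hmpos.ne'
    have b2 := Int.emod_lt_of_pos x hmpos
    have b5 : (x + 1) % ((M:ℤ)+1) = (x % ((M:ℤ)+1) + 1) % ((M:ℤ)+1) := by simp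
    simp only
    rw [b5]
    by_cases hlt : x % ((M:ℤ)+1) + 1 < M + 1
    · rw [Int.emod_eq_of_lt (by omega) hlt]
      rw [Int.toNat_add b1 (by norm_num)]
      exact h3 _ (by omega)
    · have e : x % ((M:ℤ)+1) = M := by omega
      rw [e]
      simp
      exact hs _ _ hMR
  · have : ((r:ℤ) % ((M:ℤ)+1)) = r := Int.emod_eq_of_lt (by omega) (by omega)
    simp only [this]
    simpa using hrR

open Classical in
lemma ec_double {V : Type*} (B : V → V → Prop) (hBs : ∀ a b, B a b → B b a) (X Y : Finset V) :
    ∑ u ∈ X, (Y.filter (B u)).card = ∑ v ∈ Y, (X.filter (B v)).card := by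
  simp only [Finset.card_filter]
  rw [Finset.sum_comm]
  refine Finset.sum_congr rfl fun y _ => Finset.sum_congr rfl fun x _ => ?_
  have : B x y ↔ B y x := ⟨hBs _ _, hBs _ _⟩
  simp [this]

open Classical in
lemma ec_layer {V : Type*} (G : SimpleGraph V) (k : ℕ) (hk : 2 ≤ k)
    (h : ¬∃ (v : V) (w : G.Walk v v), w.IsCycle ∧ w.length = 2 * k)
    (B : V → V → Prop) (hBG : ∀ a b, B a b → G.Adj a b) (hBs : ∀ a b, B a b → B b a)
    (L : ℕ → Finset V) (hdisj : ∀ v i j, v ∈ L i → v ∈ L j → i = j)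
    (hpar : ∀ i v, v ∈ L (i+1) → ∃ u ∈ L i, B v u) (hL0 : ∀ a b, a ∈ L 0 → b ∈ L 0 → a = b)
    (i : ℕ) (hik : i < k) :
    ∑ u ∈ L i, ((L (i+1)).filter (B u)).card ≤ k * ((L i).card + (L (i+1)).card) := by
  by_contra hcon
  push Not at hcon
  let R : V → V → Prop := fun a b => B a b ∧ ((a ∈ L i ∧ b ∈ L (i+1)) ∨ (a ∈ L (i+1) ∧ b ∈ L i))
  have hRs : ∀ a b, R a b → R b a := fun a b hab => ⟨hBs _ _ hab.1, by tauto⟩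
  have hRi : ∀ a, ¬ R a a := fun a ha => G.loopless.irrefl a (hBG _ _ ha.1)
  have hRY : ∀ a b, R a b → (b ∈ L i ↔ ¬ a ∈ L i) := by
    rintro a b ⟨_, ⟨h1, h2⟩ | ⟨h1, h2⟩⟩
    · have : b ∉ L i := fun h3 => by have := hdisj _ _ _ h2 h3; omega
      tauto
    · have : a ∉ L i := fun h3 => by have := hdisj _ _ _ h1 h3; omega
      tauto
  have hdj : Disjoint (L i) (L (i+1)) := by
    rw [Finset.disjoint_left]
    intro a h1 h2
    have := hdisj _ _ _ h1 h2
    omega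
  have hE : 2 * ∑ u ∈ L i, ((L (i+1)).filter (B u)).card ≤ ecE R (L i ∪ L (i+1)) := by
    unfold ecE
    rw [Finset.sum_union hdj, two_mul]
    refine add_le_add (Finset.sum_le_sum ?_) ?_
    · intro u hu
      apply Finset.card_le_card
      intro w hw
      simp only [Finset.mem_filter, Finset.mem_union] at hw ⊢
      exact ⟨Or.inr hw.1, hw.2, Or.inl ⟨hu, hw.1⟩⟩
    · rw [ec_double B hBs]
      refine Finset.sum_le_sum ?_
      intro u hu
      apply Finset.card_le_card
      intro w hw
      simp only [Finset.mem_filter, Finset.mem_union] at hw ⊢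
      exact ⟨Or.inl hw.1, hw.2, Or.inr ⟨hu, hw.1⟩⟩
  obtain ⟨S, hST, hSne, hSdeg⟩ := ec_mindeg R hRs hRi (k:ℝ) (L i ∪ L (i+1)) (by
    have : 2 * k * (L i ∪ L (i+1)).card < ecE R (L i ∪ L (i+1)) := by
      rw [Finset.card_union_of_disjoint hdj]
      nlinarith
    exact_mod_cast this)
  obtain ⟨u, m, r, hr, hrm, hkm, hu, hum, huR, hch⟩ := ec_long R hRs (fun v => v ∈ L i) hRY k hk S hSne
    (fun v hv => by
      have := hSdeg v hv
      exact_mod_cast this)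
  -- parents
  have hpex : ∀ v, ∃ w, ∀ j, v ∈ L (j+1) → w ∈ L j ∧ B v w := by
    intro v
    by_cases hv : ∃ j, v ∈ L (j+1)
    · obtain ⟨j, hj⟩ := hv
      obtain ⟨w, hw1, hw2⟩ := hpar j v hj
      refine ⟨w, fun j' hj' => ?_⟩
      have := hdisj _ _ _ hj hj'
      have : j = j' := by omega
      subst this
      exact ⟨hw1, hw2⟩
    · exact ⟨v, fun j hj => absurd ⟨j, hj⟩ hv⟩
  choose par hparp using hpex
  have hit : ∀ v, v ∈ L i → ∀ d, d ≤ i → par^[d] v ∈ L (i - d) := by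
    intro v hv d
    induction d with
    | zero => intro _; simpa using hv
    | succ d ih =>
      intro hd
      rw [Function.iterate_succ_apply']
      have := ih (by omega)
      rw [show i - d = (i - (d+1)) + 1 by omega] at this
      exact (hparp _ _ this).1
  have hitB : ∀ v, v ∈ L i → ∀ d, d < i → B (par^[d] v) (par^[d+1] v) := by
    intro v hv d hd
    rw [Function.iterate_succ_apply']
    have := hit v hv d hd.le
    rw [show i - d = (i - (d+1)) + 1 by omega] at this
    exact (hparp _ _ this).2
  let W : V → Prop := fun v => v ∈ L i ∧ ∃ x, v = u x
  let C : ℕ → Prop := fun d => ∀ a b, W a → W b → par^[d] a = par^[d] b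
  have hCi : C i := by
    intro a b ha hb
    apply hL0
    · simpa using hit a ha.1 i le_rfl
    · simpa using hit b hb.1 i le_rfl
  have hC0 : ¬ C 0 := by
    intro hC
    have hx : ∃ x, u x ∈ L i := by
      by_cases h0 : u 0 ∈ L i
      · exact ⟨0, h0⟩
      · exact ⟨0+1, (hRY _ _ (huR 0)).2 h0⟩
    obtain ⟨x, hx⟩ := hx
    have hx2 : u (x+1+1) ∈ L i := by
      rw [hRY _ _ (huR (x+1)), hRY _ _ (huR x)]
      simpa using hx
    have := hC (u x) (u (x+1+1)) ⟨hx, x, rfl⟩ ⟨hx2, _, rfl⟩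
    have h2 := hu _ _ this
    have h3 := Int.eq_zero_of_abs_lt_dvd h2 (by rw [abs_lt]; constructor <;> omega)
    omega
  have hexC : ∃ d, C d := ⟨i, hCi⟩
  obtain ⟨l, hl, hlmin⟩ : ∃ l, C l ∧ ∀ d < l, ¬ C d :=
    ⟨Nat.find hexC, Nat.find_spec hexC, fun d hd => Nat.find_min hexC hd⟩
  have hl1 : 1 ≤ l := by
    rcases Nat.eq_zero_or_pos l with h0 | h0
    · rw [h0] at hl; exact absurd hl hC0
    · exact h0
  have hli : l ≤ i := by
    by_contra hc
    exact hlmin i (by omega) hCi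
  have hnC := hlmin (l-1) (by omega)
  simp only [C] at hnC
  push Not at hnC
  obtain ⟨a0, b0, ⟨ha0, xa, hxa⟩, ⟨hb0, xb, hxb⟩, hab0⟩ := hnC
  obtain ⟨p, hpinj, hpR, hpA, hpY, hpnA, hpu⟩ := ec_theta R hRs u m r hr hrm hu hum huR hch
    (fun v => v ∈ L i) (fun v => v ∈ L i ∧ par^[l-1] v = par^[l-1] a0) hRY (fun a ha => ha.1)
    ⟨xa, by rw [← hxa]; exact ⟨ha0, rfl⟩⟩
    ⟨xb, by rw [← hxb]; exact ⟨hb0, fun hh => hab0 hh.2.symm⟩⟩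
    (2 * k - 2 * l) (by rw [← Nat.mul_sub]; exact even_two_mul _) (by omega) (by omega)
  set s := 2 * k - 2 * l with hs
  have hpa : p 0 ∈ L i := hpA.1
  have hmeet : par^[l] (p s) = par^[l] (p 0) := hl _ _ ⟨hpY, hpu s⟩ ⟨hpa, hpu 0⟩
  have hsep : ∀ d, d < l → par^[d] (p s) ≠ par^[d] (p 0) := by
    intro d hd he
    apply hpnA
    refine ⟨hpY, ?_⟩
    rw [← hpA.2, show l - 1 = (l - 1 - d) + d by omega, Function.iterate_add_apply,
      Function.iterate_add_apply, he]
  have hplev : ∀ t, t ≤ s → p t ∈ L i ∨ p t ∈ L (i+1) := by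
    intro t ht
    rcases Nat.lt_or_ge t s with h1 | h1
    · rcases (hpR t h1).2 with h2 | h2
      · exact Or.inl h2.1
      · exact Or.inr h2.1
    · have : t = s := by omega
      subst this; exact Or.inl hpY
  let q : ℕ → V := fun t => if t ≤ s then p t else if t ≤ s + l then par^[t-s] (p s)
    else par^[2*k-t] (p 0)
  have q1 : ∀ t, t ≤ s → q t = p t := fun t ht => by simp only [q, ht, if_true]
  have q2 : ∀ t, s ≤ t → t ≤ s + l → q t = par^[t-s] (p s) := by
    intro t h1 h2
    rcases Nat.eq_or_lt_of_le h1 with h3 | h3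
    · rw [← h3, q1 s le_rfl]; simp
    · have : ¬ t ≤ s := by omega
      simp only [q, this, h2, if_true, if_false]
  have q3 : ∀ t, s + l ≤ t → t ≤ 2 * k → q t = par^[2*k-t] (p 0) := by
    intro t h1 h2
    rcases Nat.eq_or_lt_of_le h1 with h3 | h3
    · rw [← h3, q2 _ (by omega) (by omega), show s + l - s = l by omega,
        show 2 * k - (s + l) = l by omega, hmeet]
    · have h4 : ¬ t ≤ s := by omega
      have h5 : ¬ t ≤ s + l := by omega
      simp only [q, h4, h5, if_false]
  have l2 : ∀ t, s ≤ t → t ≤ s + l → q t ∈ L (i - (t - s)) := by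
    intro t h1 h2
    rw [q2 t h1 h2]
    exact hit _ hpY _ (by omega)
  have l3 : ∀ t, s + l ≤ t → t ≤ 2 * k → q t ∈ L (i - (2*k-t)) := by
    intro t h1 h2
    rw [q3 t h1 h2]
    exact hit _ hpa _ (by omega)
  have hne : ∀ a b, a < b → b < 2 * k → q a ≠ q b := by
    intro a b hab hb heq
    rcases Nat.lt_or_ge s a with c1 | c1
    · rcases Nat.lt_or_ge (s+l) a with c2 | c2
      · have h1 := l3 a (by omega) (by omega)
        have h2 := l3 b (by omega) (by omega)
        rw [heq] at h1
        have := hdisj _ _ _ h1 h2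
        omega
      · have h1 := l2 a (by omega) (by omega)
        rcases Nat.lt_or_ge (s+l) b with c3 | c3
        · have h2 := l3 b (by omega) (by omega)
          rw [heq] at h1
          have h3 := hdisj _ _ _ h1 h2
          have h4 : a - s = 2 * k - b := by omega
          rw [q2 a (by omega) (by omega), q3 b (by omega) (by omega), h4] at heq
          exact hsep _ (by omega) heq
        · have h2 := l2 b (by omega) (by omega)
          rw [heq] at h1
          have h3 := hdisj _ _ _ h1 h2
          omega
    · rcases Nat.lt_or_ge s b with c2 | c2
      · have h1 := hplev a c1
        rw [← q1 a c1, heq] at h1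
        have h2 : ∃ d, 1 ≤ d ∧ d ≤ i ∧ q b ∈ L (i - d) := by
          rcases Nat.lt_or_ge (s+l) b with c3 | c3
          · exact ⟨_, by omega, by omega, l3 b (by omega) (by omega)⟩
          · exact ⟨_, by omega, by omega, l2 b (by omega) (by omega)⟩
        obtain ⟨d, hd1, hd2, hd⟩ := h2
        rcases h1 with h1 | h1
        · have := hdisj _ _ _ h1 hd
          omega
        · have := hdisj _ _ _ h1 hd
          omega
      · rw [q1 a c1, q1 b c2] at heq
        have := hpinj _ _ c1 c2 heq
        omega
  have hstep : ∀ t, t + 1 ≤ 2 * k → B (q t) (q (t+1)) := by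
    intro t ht
    rcases Nat.lt_or_ge t s with c1 | c1
    · rw [q1 t (by omega), q1 (t+1) (by omega)]
      exact (hpR t c1).1
    · rcases Nat.lt_or_ge t (s+l) with c2 | c2
      · rw [q2 t (by omega) (by omega), q2 (t+1) (by omega) (by omega),
          show t + 1 - s = t - s + 1 by omega]
        exact hitB _ hpY _ (by omega)
      · rw [q3 t (by omega) (by omega), q3 (t+1) (by omega) (by omega),
          show 2 * k - t = 2 * k - (t+1) + 1 by omega]
        exact hBs _ _ (hitB _ hpa _ (by omega))
  apply h
  refine ec_cycle_of_fun G (2*k) (by omega) q ?_ ?_ ?_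
  · intro a b ha hb hab
    rcases lt_trichotomy a b with h1 | h1 | h1
    · exact absurd hab (hne a b h1 hb)
    · exact h1
    · exact absurd hab.symm (hne b a h1 ha)
  · intro t ht
    exact hBG _ _ (hstep t (by omega))
  · have h1 := hBG _ _ (hstep (2*k-1) (by omega))
    rw [show 2 * k - 1 + 1 = 2 * k by omega, q3 (2*k) (by omega) le_rfl] at h1
    rw [q1 0 (by omega)]
    simpa using h1

open Classical in
lemma ec_bfs {V : Type*} [Fintype V] (H : SimpleGraph V) (f : V → Bool)
    (hf : ∀ a b, H.Adj a b → f a ≠ f b) (x : V) :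
    ∃ L : ℕ → Finset V, L 0 = {x} ∧ (∀ v i j, v ∈ L i → v ∈ L j → i = j) ∧
      (∀ i v, v ∈ L (i+1) → ∃ u ∈ L i, H.Adj v u) ∧
      (∀ v w, v ∈ L 0 → H.Adj v w → w ∈ L 1) ∧
      (∀ i v w, v ∈ L (i+1) → H.Adj v w → w ∈ L (i+2) ∨ w ∈ L i) := by
  have hw : ∀ (v : V) (w : H.Walk x v), (f v = f x ↔ Even w.length) := by
    have : ∀ (n : ℕ) (v y : V) (w : H.Walk y v), w.length = n → (f v = f y ↔ Even n) := by
      intro n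
      induction n with
      | zero =>
        intro v y w hw
        have := SimpleGraph.Walk.eq_of_length_eq_zero hw
        simp [this]
      | succ n ih =>
        intro v y w hw
        cases w with
        | nil => simp at hw
        | cons hadj w' =>
          have h1 := ih _ _ w' (by simpa using hw)
          have h2 := hf _ _ hadj
          rw [Nat.even_add_one, ← h1]
          revert h2
          generalize f v = α
          generalize f y = β
          generalize f _ = γ
          cases α <;> cases β <;> cases γ <;> simp
    intro v w
    exact this _ _ _ w rfl
  have hpar : ∀ v, H.Reachable x v → (f v = f x ↔ Even (H.dist x v)) := by
    intro v hv
    obtain ⟨w, hwl⟩ := hv.exists_walk_length_eq_dist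
    rw [← hwl]; exact hw v w
  have hle : ∀ v w, H.Reachable x v → H.Adj v w → H.Reachable x w ∧ H.dist x w ≤ H.dist x v + 1 := by
    intro v w hv hadj
    obtain ⟨p, hp⟩ := hv.exists_walk_length_eq_dist
    refine ⟨⟨p.concat hadj⟩, ?_⟩
    have := SimpleGraph.dist_le (p.concat hadj)
    rw [SimpleGraph.Walk.length_concat, hp] at this
    exact this
  have hadj : ∀ v w, H.Reachable x v → H.Adj v w → H.Reachable x w ∧
      (H.dist x w = H.dist x v + 1 ∨ H.dist x v = H.dist x w + 1) := by
    intro v w hv ha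
    obtain ⟨h1, h2⟩ := hle v w hv ha
    obtain ⟨_, h3⟩ := hle w v h1 ha.symm
    refine ⟨h1, ?_⟩
    have h4 : H.dist x v ≠ H.dist x w := by
      intro he
      have e1 := hpar v hv
      have e2 := hpar w h1
      rw [he] at e1
      have e3 := hf _ _ ha
      revert e1 e2 e3
      generalize f v = α
      generalize f w = β
      generalize f x = γ
      intro e1 e2
      rw [← e1] at e2
      revert e2
      cases α <;> cases β <;> cases γ <;> simp
    omega
  refine ⟨fun i => Finset.univ.filter (fun v => H.Reachable x v ∧ H.dist x v = i), ?_, ?_, ?_, ?_, ?_⟩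
  · ext v
    simp only [Finset.mem_filter, Finset.mem_univ, true_and, Finset.mem_singleton]
    constructor
    · rintro ⟨h1, h2⟩
      exact ((h1.dist_eq_zero_iff).1 h2).symm
    · rintro rfl
      exact ⟨SimpleGraph.Reachable.refl _, by simp⟩
  · intro v i j hi hj
    simp only [Finset.mem_filter, Finset.mem_univ, true_and] at hi hj
    omega
  · intro i v hv
    simp only [Finset.mem_filter, Finset.mem_univ, true_and] at hv
    obtain ⟨p, hp⟩ := hv.1.symm.exists_walk_length_eq_dist
    rw [SimpleGraph.dist_comm, hv.2] at hp
    cases p with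
    | nil => simp at hp
    | @cons _ u _ ha p' =>
      refine ⟨u, ?_, ha⟩
      simp only [Finset.mem_filter, Finset.mem_univ, true_and]
      have h1 := SimpleGraph.dist_le p'.reverse
      have h2 := hadj v u hv.1 ha
      simp at hp h1
      refine ⟨h2.1, ?_⟩
      omega
  · intro v w hv ha
    simp only [Finset.mem_filter, Finset.mem_univ, true_and] at hv ⊢
    have := hadj v w hv.1 ha
    refine ⟨this.1, ?_⟩
    omega
  · intro i v w hv ha
    simp only [Finset.mem_filter, Finset.mem_univ, true_and] at hv ⊢
    have := hadj v w hv.1 ha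
    have h2 := this.1
    simp only [h2, true_and]
    omega

/-- Bondy–Simonovits: for `k ≥ 2`, every graph on `n` vertices with no cycle of length
exactly `2k` has at most `8k·n^{1+1/k}` edges. -/
theorem even_cycle_turan {V : Type*} [Fintype V] (G : SimpleGraph V)
    [DecidableRel G.Adj] (k : ℕ) (hk : 2 ≤ k)
    (h : ¬∃ (v : V) (w : G.Walk v v), w.IsCycle ∧ w.length = 2 * k) :
    (G.edgeFinset.card : ℝ) ≤ 8 * k * (Fintype.card V : ℝ) ^ (1 + 1 / (k : ℝ)) := by
  classical
  by_contra hcon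
  push Not at hcon
  have hkR : (2:ℝ) ≤ k := by exact_mod_cast hk
  set n := Fintype.card V with hn
  have hedge : 2 * G.edgeFinset.card = ecE G.Adj Finset.univ := by
    rw [← G.sum_degrees_eq_twice_card_edges]
    unfold ecE
    refine Finset.sum_congr rfl fun v _ => ?_
    rw [← SimpleGraph.card_neighborFinset_eq_degree]
    congr 1
    ext w
    simp
  have hn0 : 0 < n := by
    rcases Nat.eq_zero_or_pos n with h0 | h0
    · have : IsEmpty V := Fintype.card_eq_zero_iff.1 h0
      have h1 : ecE G.Adj Finset.univ = 0 := by simp [ecE]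
      have h2 : G.edgeFinset.card = 0 := by omega
      rw [h2] at hcon
      have : (0:ℝ) ≤ 8 * k * (n : ℝ) ^ (1 + 1 / (k : ℝ)) := by positivity
      rw [Nat.cast_zero] at hcon
      linarith
    · exact h0
  have hnR : (1:ℝ) ≤ n := by exact_mod_cast hn0
  set N : ℝ := (n:ℝ) ^ (1 / (k:ℝ)) with hN
  have hN1 : 1 ≤ N := Real.one_le_rpow hnR (by positivity)
  have hNk : N ^ k = n := by
    rw [hN, ← Real.rpow_natCast, ← Real.rpow_mul (by positivity)]
    rw [one_div, inv_mul_cancel₀ (by positivity), Real.rpow_one]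
  rw [Real.rpow_add (by positivity), Real.rpow_one, ← hN] at hcon
  obtain ⟨f, hf⟩ := ec_cut G.Adj (fun a b h => h.symm) (fun a => G.loopless.irrefl a) Finset.univ
  rw [← hedge] at hf
  obtain ⟨S, -, ⟨x, hx⟩, hdeg⟩ := ec_mindeg (fun a b => G.Adj a b ∧ f a ≠ f b)
    (fun a b h => ⟨h.1.symm, h.2.symm⟩) (fun a h => h.2 rfl) (4 * k * N) Finset.univ (by
      have : (G.edgeFinset.card : ℝ) ≤ ecE (fun a b => G.Adj a b ∧ f a ≠ f b) Finset.univ := by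
        have h2 := Nat.le_of_mul_le_mul_left hf (by norm_num)
        exact Nat.cast_le.2 h2
      rw [Finset.card_univ, ← hn]
      nlinarith)
  obtain ⟨H, hH⟩ : ∃ H : SimpleGraph V, ∀ a b, H.Adj a b ↔ (G.Adj a b ∧ f a ≠ f b) ∧ a ∈ S ∧ b ∈ S :=
    ⟨{ Adj := fun a b => (G.Adj a b ∧ f a ≠ f b) ∧ a ∈ S ∧ b ∈ S
       symm := ⟨fun a b h => ⟨⟨h.1.1.symm, h.1.2.symm⟩, h.2.2, h.2.1⟩⟩
       loopless := ⟨fun a h => h.1.2 rfl⟩ }, fun a b => Iff.rfl⟩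
  have hHs : ∀ a b, H.Adj a b → H.Adj b a := fun a b h => h.symm
  obtain ⟨L, hL0, hdisj, hpar, hst0, hst⟩ := ec_bfs H f (fun a b h => ((hH _ _).1 h).1.2) x
  have hLS : ∀ i v, v ∈ L i → v ∈ S := by
    intro i v hv
    cases i with
    | zero => rw [hL0, Finset.mem_singleton] at hv; rw [hv]; exact hx
    | succ i =>
      obtain ⟨u, _, hu⟩ := hpar i v hv
      exact ((hH _ _).1 hu).2.1
  have hlay := fun i (hi : i < k) => ec_layer G k hk h H.Adj (fun a b h => ((hH _ _).1 h).1.1) hHs L hdisj hpar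
    (by intro a b ha hb; rw [hL0, Finset.mem_singleton] at ha hb; rw [ha, hb]) i hi
  let e : ℕ → ℕ := fun i => ∑ u ∈ L i, ((L (i+1)).filter (H.Adj u)).card
  have he : ∀ i, i < k → (e i : ℝ) ≤ k * ((L i).card + (L (i+1)).card) := by
    intro i hi
    exact_mod_cast hlay i hi
  have hd1 : ∀ i, (4 * k * N) * (L (i+1)).card ≤ e i + e (i+1) := by
    intro i
    simp only [e]
    rw [ec_double H.Adj hHs (L i) (L (i+1))]
    push_cast
    rw [← Finset.sum_add_distrib, mul_comm, ← nsmul_eq_mul]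
    refine Finset.card_nsmul_le_sum _ _ _ fun v hv => ?_
    refine (hdeg v (hLS _ _ hv)).le.trans ?_
    norm_cast
    refine le_trans (Finset.card_le_card ?_) (Finset.card_union_le _ _)
    intro w hw
    simp only [Finset.mem_filter, Finset.mem_union] at hw ⊢
    have ha : H.Adj v w := (hH _ _).2 ⟨hw.2, hLS _ _ hv, hw.1⟩
    rcases hst i v w hv ha with h1 | h1
    · exact Or.inr ⟨h1, ha⟩
    · exact Or.inl ⟨h1, ha⟩
  have hkpos : (0:ℝ) < k := by linarith
  have hc0 : ((L 0).card : ℝ) = 1 := by rw [hL0]; simp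
  have hd0' : (4 * k * N) * (L 0).card < e 0 := by
    have h1 := hdeg x hx
    rw [hc0, mul_one]
    refine h1.trans_le ?_
    simp only [e]
    rw [hL0, Finset.sum_singleton]
    norm_cast
    apply Finset.card_le_card
    intro w hw
    simp only [Finset.mem_filter] at hw ⊢
    have ha : H.Adj x w := (hH _ _).2 ⟨hw.2, hx, hw.1⟩
    exact ⟨hst0 x w (by rw [hL0]; simp) ha, ha⟩
  have hgrow : ∀ i, i < k → N ^ i ≤ (L i).card ∧ N * (L i).card ≤ (L (i+1)).card ∧
      N ^ (i+1) < (L (i+1)).card := by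
    intro i
    induction i with
    | zero =>
      intro hi
      have h1 := hd0'.trans_le (he 0 hi)
      rw [hc0] at h1 ⊢
      have : 4 * N * 1 < 1 + ((L (0+1)).card : ℝ) := by
        refine lt_of_mul_lt_mul_left ?_ hkpos.le
        linarith
      refine ⟨by simp, by linarith, ?_⟩
      simp only [zero_add, pow_one] at this ⊢
      linarith
    | succ i ih =>
      intro hi
      obtain ⟨h0, h2, h8⟩ := ih (by omega)
      have h1 : (0:ℝ) < (L i).card := lt_of_lt_of_le (by positivity) h0
      have h3 : ((L i).card : ℝ) ≤ (L (i+1)).card := by nlinarith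
      have h4 := hd1 i
      have h5 := he i (by omega)
      have h6 := he (i+1) hi
      have h7 : 4 * N * ((L (i+1)).card : ℝ) ≤
          ((L i).card + (L (i+1)).card) + ((L (i+1)).card + (L (i+1+1)).card) := by
        refine le_of_mul_le_mul_left ?_ hkpos
        linarith
      have h9 : N * ((L (i+1)).card : ℝ) ≤ (L (i+1+1)).card := by nlinarith
      refine ⟨h8.le, h9, lt_of_lt_of_le ?_ h9⟩
      rw [pow_succ N (i+1), mul_comm]
      exact mul_lt_mul_of_pos_left h8 (by linarith)
  have hfin := (hgrow (k-1) (by omega)).2.2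
  rw [show k - 1 + 1 = k by omega, hNk] at hfin
  have hle : (L k).card ≤ n := Finset.card_le_univ _
  have : n < (L k).card := by exact_mod_cast hfin
  omega
end
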